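/- Let a = (φ, ν) be a ribbon with σ(a) ∉ {−2, 2}, and let ā = (φ, −ν) be the ribbon obtained from a by reversing the sign of every node. Then γ(a) + γ(ā) ≥ 2 + |σ(a)|/2. -/

import Mathlib

open scoped RealInnerProductSpace

noncomputable section

abbrev E2 : Type := EuclideanSpace ℝ (Fin 2)

/-- The point (cos t, sin t) on the unit circle in ℝ². -/
def sphPt (t : ℝ) : E2 := (EuclideanSpace.equiv (Fin 2) ℝ).symm ![Real.cos t, Real.sin t]

/-- A ribbon with `n` nodes, encoded via the angle parametrization `g = φ ∘ (cos, sin)`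
of a C^∞ function `φ : S¹ → ℝ` whose critical points on the circle are exactly the `n`
nondegenerate local extrema (nodes) at angles `θ 0 < θ 1 < ⋯ < θ (n-1)` in `[0, 2π)`,
with pairwise distinct critical values, together with a marking `ν` of the nodes by `±1`. -/
structure Ribbon (n : ℕ) : Type where
  g : ℝ → ℝ
  θ : Fin n → ℝ
  ν : Fin n → ℤ
  n_even : Even n
  n_pos : 0 < n
  smooth_g : ContDiff ℝ (⊤ : ℕ∞) g
  periodic_g : Function.Periodic g (2 * Real.pi)
  theta_mem : ∀ i, θ i ∈ Set.Ico (0 : ℝ) (2 * Real.pi)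
  theta_mono : StrictMono θ
  node_crit : ∀ i, deriv g (θ i) = 0
  node_nondeg : ∀ i, deriv (deriv g) (θ i) ≠ 0
  crit_only : ∀ t ∈ Set.Ico (0 : ℝ) (2 * Real.pi), deriv g t = 0 → ∃ i, t = θ i
  values_distinct : ∀ i j, g (θ i) = g (θ j) → i = j
  nu_sign : ∀ i, ν i = 1 ∨ ν i = -1

/-- The signature σ = s₊ − s₋ of a ribbon. -/
def Ribbon.sigma {n : ℕ} (a : Ribbon n) : ℤ := ∑ i, a.ν i

/-- Critical points of `f` in the open unit disk. -/
def critPts (f : E2 → ℝ) : Set E2 :=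
  {x | x ∈ Metric.ball (0 : E2) 1 ∧ fderiv ℝ f x = 0}

/-- `f : ℝ² → ℝ` is an extension of the ribbon `a`: it is C^∞, agrees with `φ` on the unit
circle, has nowhere-vanishing gradient on the circle, and at each node the radial derivative
`⟪∇f(p), p⟫` has sign `ν p` if `p` is a local maximum of `φ` (second derivative of `g`
negative there) and sign `−ν p` if `p` is a local minimum of `φ`. -/
def IsExtension {n : ℕ} (a : Ribbon n) (f : E2 → ℝ) : Prop :=
  ContDiff ℝ (⊤ : ℕ∞) f ∧
  (∀ t : ℝ, f (sphPt t) = a.g t) ∧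
  (∀ x ∈ Metric.sphere (0 : E2) 1, fderiv ℝ f x ≠ 0) ∧
  (∀ i : Fin n,
    (deriv (deriv a.g) (a.θ i) < 0 →
      0 < (a.ν i : ℝ) * ⟪gradient f (sphPt (a.θ i)), sphPt (a.θ i)⟫) ∧
    (0 < deriv (deriv a.g) (a.θ i) →
      (a.ν i : ℝ) * ⟪gradient f (sphPt (a.θ i)), sphPt (a.θ i)⟫ < 0))

/-- The ribbon invariant γ: the infimum, over all extensions `f` of `a`, of the number of
critical points of `f` in the open unit disk (a value in `ℕ∞`). -/
def gammaR {n : ℕ} (a : Ribbon n) : ℕ∞ :=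
  sInf {k : ℕ∞ | ∃ f : E2 → ℝ, IsExtension a f ∧ (critPts f).encard = k}

theorem rb_hp {a b c : ℂ} (ha : 0 < (a / c).re) (hb : 0 < (b / c).re) :
    (b / a).arg = (b / c).arg - (a / c).arg := by
  have ha0 : a / c ≠ 0 := by intro h; rw [h] at ha; simp at ha
  have hb0 : b / c ≠ 0 := by intro h; rw [h] at hb; simp at hb
  have hc : c ≠ 0 := by rintro rfl; simp at ha0
  have h1 := abs_lt.1 (Complex.abs_arg_lt_pi_div_two_iff.2 (Or.inl ha))
  have h2 := abs_lt.1 (Complex.abs_arg_lt_pi_div_two_iff.2 (Or.inl hb))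
  have e : b / a = (b / c) * (a / c)⁻¹ := by
    have : a ≠ 0 := by rintro rfl; simp at ha0
    field_simp
  have hinv : ((a / c)⁻¹).arg = - (a / c).arg := by
    rw [Complex.arg_inv, if_neg]; intro h; rw [h] at h1; linarith [Real.pi_pos]
  rw [e, Complex.arg_mul hb0 (inv_ne_zero ha0), hinv]
  · ring
  · rw [hinv]; constructor <;> linarith [h1.1, h1.2, h2.1, h2.2]

/-- turning of six vectors around a vertex -/
def rbTurn6 (a0 a1 a2 a3 a4 a5 : ℂ) : ℝ :=
  (a1 / a0).arg - (a3 / a4).arg + (a2 / a1).arg - (a4 / a5).arg + (a0 / a5).arg - (a2 / a3).arg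

theorem rb_turn_reg {a0 a1 a2 a3 a4 a5 c : ℂ} (h0 : 0 < (a0 / c).re) (h1 : 0 < (a1 / c).re)
    (h2 : 0 < (a2 / c).re) (h3 : 0 < (a3 / c).re) (h4 : 0 < (a4 / c).re) (h5 : 0 < (a5 / c).re) :
    rbTurn6 a0 a1 a2 a3 a4 a5 = 0 := by
  unfold rbTurn6
  rw [rb_hp h0 h1, rb_hp h4 h3, rb_hp h1 h2, rb_hp h5 h4, rb_hp h5 h0, rb_hp h3 h2]
  ring

theorem rb_re_pos {a c : ℂ} (h : ‖a - c‖ < ‖c‖) : 0 < (a / c).re := by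
  have hc : c ≠ 0 := by rintro rfl; simp at h; linarith [norm_nonneg a]
  have e : a / c = 1 + (a - c) / c := by field_simp; ring
  have : ‖(a - c) / c‖ < 1 := by
    rw [norm_div]; exact (div_lt_one (norm_pos_iff.2 hc)).2 h
  have h2 := (abs_le.1 (Complex.abs_re_le_norm ((a - c) / c))).1
  rw [e, Complex.add_re, Complex.one_re]; linarith

theorem rb_arg_flip {a x : ℂ} (h : 0 < (a / x).re) : (x / a).arg = - (a / x).arg := by
  have : x / a = (a / x)⁻¹ := by rw [inv_div]
  rw [this, Complex.arg_inv, if_neg]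
  intro h'
  have h1 := abs_lt.1 (Complex.abs_arg_lt_pi_div_two_iff.2 (Or.inl h))
  rw [h'] at h1; linarith [Real.pi_pos]

theorem rb_re_flip {a x : ℂ} (h : 0 < (a / x).re) : 0 < (x / a).re := by
  have : x / a = (a / x)⁻¹ := by rw [inv_div]
  have h0 : a / x ≠ 0 := by intro h'; rw [h'] at h; simp at h
  rw [this, Complex.inv_re]
  exact div_pos h (Complex.normSq_pos.2 h0)

theorem rb_wedge {a x y : ℂ} (hx : 0 < (a / x).re) (hy : 0 < (a / y).re) :
    (a / x).arg - (a / y).arg = (y / x).arg := by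
  rw [rb_hp (rb_re_flip hx) (rb_re_flip hy), rb_arg_flip hx, rb_arg_flip hy]; ring

def rbS (d : ℝ) : ℂ := if d < 0 then -1 else 1

theorem rb_half {a e : ℂ} {d : ℝ} (hd : d ≠ 0) (h : a.re * e.re + a.im * e.im = d) :
    0 < (a / (rbS d * e)).re := by
  have he : e ≠ 0 := by rintro rfl; simp at h; exact hd h.symm
  have hn : 0 < Complex.normSq e := Complex.normSq_pos.2 he
  have key : (a / e).re = d / Complex.normSq e := by
    rw [Complex.div_re, ← h]; ring
  unfold rbS
  split_ifs with hlt
  · have : a / (-1 * e) = - (a / e) := by field_simp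
    rw [this, Complex.neg_re, key, ← neg_div]; exact div_pos (by linarith) hn
  · rw [one_mul, key]; exact div_pos (lt_of_le_of_ne (not_lt.1 hlt) (Ne.symm hd)) hn

def rbX (p q : ℝ) : ℝ := if (p < 0 ↔ q < 0) then 0 else 1

theorem rb_wedge_val {e f : ℂ} {t : ℝ} (ht : 0 < t) (ht' : t < Real.pi) (h : (f / e).arg = t) (p q : ℝ) :
    ((rbS q * f) / (rbS p * e)).arg = t - Real.pi * rbX p q := by
  have hn : (-(f / e)).arg = t - Real.pi := by
    have him : 0 < (f / e).im := by
      have h1 : 0 ≤ (f / e).im := Complex.arg_nonneg_iff.1 (by rw [h]; exact ht.le)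
      refine lt_of_le_of_ne h1 fun h2 => ?_
      rcases le_or_gt 0 (f / e).re with h3 | h3
      · have := Complex.arg_eq_zero_iff.2 ⟨h3, h2.symm⟩; linarith
      · have := Complex.arg_eq_pi_iff.2 ⟨h3, h2.symm⟩; linarith
    rw [Complex.arg_neg_eq_arg_sub_pi_of_im_pos him, h]
  unfold rbS rbX
  by_cases hp : p < 0 <;> by_cases hq : q < 0 <;> simp only [hp, hq, if_true, if_false]
  · rw [show -1 * f / (-1 * e) = f / e by rw [neg_one_mul, neg_one_mul, neg_div_neg_eq], h]; simp
  · rw [show 1 * f / (-1 * e) = -(f / e) by rw [one_mul, neg_one_mul, div_neg], hn]; simp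
  · rw [show -1 * f / (1 * e) = -(f / e) by rw [one_mul, neg_one_mul, neg_div], hn]; simp
  · rw [show 1 * f / (1 * e) = (f / e) by rw [one_mul, one_mul], h]; simp

theorem rb_arg_quarter {z : ℂ} (h : z.re = z.im) (h0 : 0 < z.re) : z.arg = Real.pi / 4 := by
  have e : z = (z.re * Real.sqrt 2 : ℝ) * (Complex.cos (Real.pi / 4 : ℝ) + Complex.sin (Real.pi / 4 : ℝ) * Complex.I) := by
    have h2 : Real.sqrt 2 * Real.sqrt 2 = 2 := Real.mul_self_sqrt (by norm_num)
    rw [← Complex.ofReal_cos, ← Complex.ofReal_sin, Real.cos_pi_div_four, Real.sin_pi_div_four]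
    apply Complex.ext
    · simp; nlinarith
    · simp; nlinarith
  rw [e, Complex.arg_mul_cos_add_sin_mul_I (by positivity)]
  constructor <;> linarith [Real.pi_pos]

theorem rb_turn_pl {a0 a1 a2 a3 a4 a5 : ℂ} {d0 d1 d2 d3 d4 d5 : ℝ}
    (n0 : d0 ≠ 0) (n1 : d1 ≠ 0) (n2 : d2 ≠ 0) (n3 : d3 ≠ 0) (n4 : d4 ≠ 0) (n5 : d5 ≠ 0)
    (p0 : a0.re = d0) (q0 : a0.re + a0.im = d1)
    (p1 : a1.re + a1.im = d1) (q1 : a1.im = d2)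
    (p2 : a2.im = d2) (q2 : -a2.re = d3)
    (p3 : -a3.re = d3) (q3 : -a3.re - a3.im = d4)
    (p4 : -a4.re - a4.im = d4) (q4 : -a4.im = d5)
    (p5 : -a5.im = d5) (q5 : a5.re = d0) :
    rbTurn6 a0 a1 a2 a3 a4 a5 = 2 * Real.pi - Real.pi * (rbX d0 d1 + rbX d1 d2 + rbX d2 d3 +
      rbX d3 d4 + rbX d4 d5 + rbX d5 d0) := by
  have P0 := rb_half (a := a0) (e := 1) n0 (by simp [p0])
  have Q0 := rb_half (a := a0) (e := 1 + Complex.I) n1 (by simp [q0])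
  have P1 := rb_half (a := a1) (e := 1 + Complex.I) n1 (by simp [p1])
  have Q1 := rb_half (a := a1) (e := Complex.I) n2 (by simp [q1])
  have P2 := rb_half (a := a2) (e := Complex.I) n2 (by simp [p2])
  have Q2 := rb_half (a := a2) (e := -1) n3 (by simp [q2])
  have P3 := rb_half (a := a3) (e := -1) n3 (by simp [p3])
  have Q3 := rb_half (a := a3) (e := -1 - Complex.I) n4 (by simp; linarith)
  have P4 := rb_half (a := a4) (e := -1 - Complex.I) n4 (by simp; linarith)
  have Q4 := rb_half (a := a4) (e := -Complex.I) n5 (by simp [q4])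
  have P5 := rb_half (a := a5) (e := -Complex.I) n5 (by simp [p5])
  have Q5 := rb_half (a := a5) (e := 1) n0 (by simp [q5])
  have pp := Real.pi_pos
  have w0 := (rb_wedge P0 Q0).trans (rb_wedge_val (t := Real.pi / 4) (by linarith) (by linarith)
    (rb_arg_quarter (by simp) (by simp)) d0 d1)
  have w1 := (rb_wedge P1 Q1).trans (rb_wedge_val (t := Real.pi / 4) (by linarith) (by linarith)
    (rb_arg_quarter (by simp [Complex.div_re, Complex.div_im, Complex.normSq]) (by simp [Complex.div_re, Complex.normSq])) d1 d2)
  have w2 := (rb_wedge P2 Q2).trans (rb_wedge_val (t := Real.pi / 2) (by linarith) (by linarith)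
    (by rw [show (-1 : ℂ) / Complex.I = Complex.I by simp]; exact Complex.arg_I) d2 d3)
  have w3 := (rb_wedge P3 Q3).trans (rb_wedge_val (t := Real.pi / 4) (by linarith) (by linarith)
    (by apply rb_arg_quarter <;> simp [Complex.div_re, Complex.div_im, Complex.normSq]) d3 d4)
  have w4 := (rb_wedge P4 Q4).trans (rb_wedge_val (t := Real.pi / 4) (by linarith) (by linarith)
    (rb_arg_quarter (by simp [Complex.div_re, Complex.div_im, Complex.normSq]) (by simp [Complex.div_re, Complex.normSq])) d4 d5)
  have w5 := (rb_wedge P5 Q5).trans (rb_wedge_val (t := Real.pi / 2) (by linarith) (by linarith)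
    (by rw [show (1 : ℂ) / (-Complex.I) = Complex.I by simp]; exact Complex.arg_I) d5 d0)
  unfold rbTurn6
  rw [rb_hp Q0 P1, rb_hp P4 Q3, rb_hp Q1 P2, rb_hp P5 Q4, rb_hp Q5 P0, rb_hp P3 Q2]
  linear_combination w0 + w1 + w2 + w3 + w4 + w5

def rbDir : Fin 6 → ℤ × ℤ := ![(1,0),(1,1),(0,1),(-1,0),(-1,-1),(0,-1)]

def rbNb (v : ℤ × ℤ) (k : Fin 6) : ℤ × ℤ := v + rbDir k

theorem rbNb_inj (v : ℤ × ℤ) {k l : Fin 6} (h : rbNb v k = rbNb v l) : k = l := by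
  have h' : rbDir k = rbDir l := add_left_cancel h
  have key : ∀ k l, rbDir k = rbDir l → k = l := by decide
  exact key k l h'

theorem rbNb_ne (v : ℤ × ℤ) (k : Fin 6) : rbNb v k ≠ v := by
  intro h
  have h' : rbDir k = 0 := by simpa [rbNb] using h
  have key : ∀ k, rbDir k ≠ 0 := by decide
  exact key k h'

theorem rbDir_step (k : Fin 6) : rbDir k + rbDir (k + 2) = rbDir (k + 1) := by
  revert k; decide
theorem rbDir_opp (k : Fin 6) : rbDir k + rbDir (k + 3) = 0 := by
  revert k; decide

theorem rbNb_step (v : ℤ × ℤ) (k : Fin 6) : rbNb (rbNb v k) (k + 2) = rbNb v (k + 1) := by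
  unfold rbNb; rw [add_assoc, rbDir_step]
theorem rbNb_opp (v : ℤ × ℤ) (k : Fin 6) : rbNb (rbNb v k) (k + 3) = v := by
  unfold rbNb; rw [add_assoc, rbDir_opp, add_zero]

def rbTri (v : ℤ × ℤ) (k : Fin 6) : Finset (ℤ × ℤ) := {v, rbNb v k, rbNb v (k + 1)}

theorem rbTri_rot (v : ℤ × ℤ) (k : Fin 6) : rbTri (rbNb v k) (k + 2) = rbTri v k := by
  unfold rbTri
  rw [rbNb_step, show k + 2 + 1 = k + 3 by revert k; decide, rbNb_opp]
  ext x; simp only [Finset.mem_insert, Finset.mem_singleton]; tauto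

theorem rbTri_rot2 (v : ℤ × ℤ) (k : Fin 6) : rbTri (rbNb v (k + 1)) (k + 4) = rbTri v k := by
  rw [← rbTri_rot v k, ← rbTri_rot (rbNb v k) (k+2), rbNb_step]
  congr 1
  revert k; decide

theorem rbTri_mem {t v : ℤ × ℤ} {l : Fin 6} (h : v ∈ rbTri t l) : ∃ l', rbTri t l = rbTri v l' := by
  simp only [rbTri, Finset.mem_insert, Finset.mem_singleton] at h
  rcases h with rfl | rfl | rfl
  · exact ⟨l, rfl⟩
  · exact ⟨l + 2, (rbTri_rot t l).symm⟩
  · exact ⟨l + 4, (rbTri_rot2 t l).symm⟩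

theorem rbTri_edge {v : ℤ × ℤ} {k l : Fin 6} (h : rbNb v k ∈ rbTri v l) : l = k ∨ l = k + 5 := by
  simp only [rbTri, Finset.mem_insert, Finset.mem_singleton] at h
  rcases h with h | h | h
  · exact absurd h (rbNb_ne v k)
  · exact Or.inl (rbNb_inj v h).symm
  · have := rbNb_inj v h
    right; subst this; clear h; revert l; decide

theorem rbTri_card (v : ℤ × ℤ) (k : Fin 6) : (rbTri v k).card = 3 := by
  unfold rbTri
  rw [Finset.card_eq_three]
  refine ⟨_, _, _, (rbNb_ne v k).symm, (rbNb_ne v (k+1)).symm, ?_, rfl⟩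
  intro h
  have := rbNb_inj v h
  have key : ∀ k : Fin 6, k ≠ k + 1 := by decide
  exact key k this

theorem rbTri_inj {v : ℤ × ℤ} {k l : Fin 6} (h : rbTri v k = rbTri v l) : k = l := by
  have h1 : rbNb v k ∈ rbTri v l := by rw [← h]; simp [rbTri]
  have h2 : rbNb v (k+1) ∈ rbTri v l := by rw [← h]; simp [rbTri]
  have a := rbTri_edge h1
  have b := rbTri_edge h2
  clear h1 h2 h
  revert a b; revert k l; decide

theorem rbTri_adj {v x y : ℤ × ℤ} {k : Fin 6} (hx : x ∈ rbTri v k) (hy : y ∈ rbTri v k) (hxy : y ≠ x) :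
    ∃ l, y = rbNb x l := by
  obtain ⟨l, hl⟩ := rbTri_mem hx
  rw [hl] at hy
  simp only [rbTri, Finset.mem_insert, Finset.mem_singleton] at hy
  rcases hy with h | h | h
  · exact absurd h hxy
  · exact ⟨_, h⟩
  · exact ⟨_, h⟩

section euler
variable {α : Type*} [LinearOrder α]

def rbInd (key : ℤ × ℤ → α) (v : ℤ × ℤ) : ℤ :=
  1 - (Finset.univ.filter fun k : Fin 6 => key (rbNb v k) < key v).card
    + (Finset.univ.filter fun k : Fin 6 => key (rbNb v k) < key v ∧ key (rbNb v (k + 1)) < key v).card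

def rbC1 (key : ℤ × ℤ → α) (M : Finset (ℤ × ℤ)) : Finset (Finset (ℤ × ℤ)) :=
  M.biUnion fun v => (Finset.univ.filter fun k : Fin 6 => key (rbNb v k) < key v).image
    fun k => {v, rbNb v k}

def rbC2 (key : ℤ × ℤ → α) (M : Finset (ℤ × ℤ)) : Finset (Finset (ℤ × ℤ)) :=
  M.biUnion fun v => (Finset.univ.filter fun k : Fin 6 => key (rbNb v k) < key v ∧ key (rbNb v (k + 1)) < key v).image
    fun k => rbTri v k

theorem rb_mem_C1 {key : ℤ × ℤ → α} {M : Finset (ℤ × ℤ)} {e : Finset (ℤ × ℤ)} :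
    e ∈ rbC1 key M ↔ ∃ v ∈ M, ∃ k, key (rbNb v k) < key v ∧ e = {v, rbNb v k} := by
  simp only [rbC1, Finset.mem_biUnion, Finset.mem_image, Finset.mem_filter, Finset.mem_univ, true_and]
  constructor
  · rintro ⟨v, hv, k, hk, rfl⟩; exact ⟨v, hv, k, hk, rfl⟩
  · rintro ⟨v, hv, k, hk, rfl⟩; exact ⟨v, hv, k, hk, rfl⟩

theorem rb_mem_C2 {key : ℤ × ℤ → α} {M : Finset (ℤ × ℤ)} {e : Finset (ℤ × ℤ)} :
    e ∈ rbC2 key M ↔ ∃ v ∈ M, ∃ k, (key (rbNb v k) < key v ∧ key (rbNb v (k + 1)) < key v) ∧ e = rbTri v k := by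
  simp only [rbC2, Finset.mem_biUnion, Finset.mem_image, Finset.mem_filter, Finset.mem_univ, true_and]
  constructor
  · rintro ⟨v, hv, k, hk, rfl⟩; exact ⟨v, hv, k, hk, rfl⟩
  · rintro ⟨v, hv, k, hk, rfl⟩; exact ⟨v, hv, k, hk, rfl⟩

theorem rb_card_C1 {key : ℤ × ℤ → α} (hk : Function.Injective key) (M : Finset (ℤ × ℤ)) :
    (rbC1 key M).card = ∑ v ∈ M, (Finset.univ.filter fun k : Fin 6 => key (rbNb v k) < key v).card := by
  unfold rbC1
  rw [Finset.card_biUnion]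
  · refine Finset.sum_congr rfl fun v _ => Finset.card_image_of_injOn ?_
    intro k _ l _ h
    have : rbNb v k ∈ ({v, rbNb v l} : Finset (ℤ × ℤ)) := by
      have h' : ({v, rbNb v k} : Finset (ℤ × ℤ)) = {v, rbNb v l} := h
      rw [← h']; simp
    simp only [Finset.mem_insert, Finset.mem_singleton] at this
    rcases this with h | h
    · exact absurd h (rbNb_ne v k)
    · exact rbNb_inj v h
  · intro v _ w _ hvw
    rw [Function.onFun, Finset.disjoint_left]
    intro e he he'
    simp only [Finset.mem_image, Finset.mem_filter, Finset.mem_univ, true_and] at he he'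
    obtain ⟨k, h1, rfl⟩ := he
    obtain ⟨l, h2, h3⟩ := he'
    have hv : v ∈ ({w, rbNb w l} : Finset (ℤ × ℤ)) := by rw [h3]; simp
    have hw : w ∈ ({v, rbNb v k} : Finset (ℤ × ℤ)) := by rw [← h3]; simp
    simp only [Finset.mem_insert, Finset.mem_singleton] at hv hw
    rcases hv with hv | hv
    · exact hvw hv
    · rcases hw with hw | hw
      · exact hvw hw.symm
      · rw [← hv] at h2; rw [← hw] at h1; exact lt_asymm h1 h2

theorem rb_card_C2 {key : ℤ × ℤ → α} (hk : Function.Injective key) (M : Finset (ℤ × ℤ)) :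
    (rbC2 key M).card = ∑ v ∈ M, (Finset.univ.filter fun k : Fin 6 =>
      key (rbNb v k) < key v ∧ key (rbNb v (k + 1)) < key v).card := by
  unfold rbC2
  rw [Finset.card_biUnion]
  · refine Finset.sum_congr rfl fun v _ => Finset.card_image_of_injOn ?_
    intro k _ l _ h
    exact rbTri_inj h
  · intro v _ w _ hvw
    rw [Function.onFun, Finset.disjoint_left]
    intro e he he'
    simp only [Finset.mem_image, Finset.mem_filter, Finset.mem_univ, true_and] at he he'
    obtain ⟨k, h1, rfl⟩ := he
    obtain ⟨l, h2, h3⟩ := he'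
    have hv : v ∈ rbTri w l := by rw [h3]; simp [rbTri]
    have hw : w ∈ rbTri v k := by rw [← h3]; simp [rbTri]
    simp only [rbTri, Finset.mem_insert, Finset.mem_singleton] at hv hw
    have a : key v < key w := by
      rcases hv with hv | hv | hv
      · exact absurd hv hvw
      · rw [hv]; exact h2.1
      · rw [hv]; exact h2.2
    have b : key w < key v := by
      rcases hw with hv | hv | hv
      · exact absurd hv.symm hvw
      · rw [hv]; exact h1.1
      · rw [hv]; exact h1.2
    exact lt_asymm a b

theorem rb_sum_ind {key : ℤ × ℤ → α} (hk : Function.Injective key) (M : Finset (ℤ × ℤ)) :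
    ∑ v ∈ M, rbInd key v = (M.card : ℤ) - (rbC1 key M).card + (rbC2 key M).card := by
  rw [rb_card_C1 hk, rb_card_C2 hk]
  simp only [rbInd, Finset.sum_add_distrib, Finset.sum_sub_distrib]
  simp

/-- convexity of M in the order -/
def rbConv (key : ℤ × ℤ → α) (M : Finset (ℤ × ℤ)) : Prop :=
  ∀ w, w ∉ M → (∀ v ∈ M, key w < key v) ∨ (∀ v ∈ M, key v < key w)

theorem rbConv.mem {key : ℤ × ℤ → α} {M : Finset (ℤ × ℤ)} (h : rbConv key M) {x y z : ℤ × ℤ}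
    (hx : x ∈ M) (hz : z ∈ M) (h1 : key x ≤ key y) (h2 : key y ≤ key z) : y ∈ M := by
  by_contra hy
  rcases h y hy with h' | h'
  · exact absurd (h' x hx) (not_lt.2 h1)
  · exact absurd (h' z hz) (not_lt.2 h2)

/-- an edge with an endpoint in M and the top endpoint bounded by an element of M is in C1 -/
theorem rb_edge_C1 {key : ℤ × ℤ → α} (hk : Function.Injective key) {M : Finset (ℤ × ℤ)} (h : rbConv key M)
    {v z : ℤ × ℤ} {k : Fin 6} (hv : v ∈ M) (hz : z ∈ M) (h2 : key (rbNb v k) ≤ key z) :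
    ({v, rbNb v k} : Finset (ℤ × ℤ)) ∈ rbC1 key M := by
  rw [rb_mem_C1]
  rcases lt_or_ge (key (rbNb v k)) (key v) with h1 | h1
  · exact ⟨v, hv, k, h1, rfl⟩
  · have h3 : key v < key (rbNb v k) := lt_of_le_of_ne h1 fun h4 => rbNb_ne v k (hk h4).symm
    refine ⟨rbNb v k, h.mem hv hz h1 h2, k + 3, ?_, ?_⟩
    · rwa [rbNb_opp]
    · rw [rbNb_opp, Finset.pair_comm]

theorem rb_tri_C2 {key : ℤ × ℤ → α} (hk : Function.Injective key) {M : Finset (ℤ × ℤ)} (h : rbConv key M)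
    {v z : ℤ × ℤ} {k : Fin 6} (hv : v ∈ M) (hz : z ∈ M) (h2 : key (rbNb v k) ≤ key z)
    (h3 : key (rbNb v (k+1)) ≤ key z) :
    rbTri v k ∈ rbC2 key M := by
  obtain ⟨t, ht, hmax⟩ := (rbTri v k).exists_max_image key ⟨v, by simp [rbTri]⟩
  have htM : t ∈ M := by
    simp only [rbTri, Finset.mem_insert, Finset.mem_singleton] at ht
    have hvt : key v ≤ key t := hmax v (by simp [rbTri])
    rcases ht with rfl | rfl | rfl
    · exact hv
    · exact h.mem hv hz hvt h2
    · exact h.mem hv hz hvt h3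
  obtain ⟨l, hl⟩ := rbTri_mem ht
  rw [rb_mem_C2]
  refine ⟨t, htM, l, ?_, hl⟩
  rw [hl] at hmax
  constructor
  · refine lt_of_le_of_ne (hmax _ (by simp [rbTri])) fun h4 => rbNb_ne t _ (hk h4)
  · refine lt_of_le_of_ne (hmax _ (by simp [rbTri])) fun h4 => rbNb_ne t _ (hk h4)

theorem rb_C2_top {key : ℤ × ℤ → α} {M : Finset (ℤ × ℤ)} {T : Finset (ℤ × ℤ)} (hT : T ∈ rbC2 key M) :
    ∃ t ∈ M, (∀ x ∈ T, key x ≤ key t) ∧ ∃ l, T = rbTri t l := by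
  rw [rb_mem_C2] at hT
  obtain ⟨t, ht, l, h, rfl⟩ := hT
  refine ⟨t, ht, ?_, l, rfl⟩
  intro x hx
  simp only [rbTri, Finset.mem_insert, Finset.mem_singleton] at hx
  rcases hx with rfl | rfl | rfl
  · exact le_rfl
  · exact h.1.le
  · exact h.2.le

def rbD1 (key : ℤ × ℤ → α) (M : Finset (ℤ × ℤ)) : Matrix M (rbC1 key M) (ZMod 2) :=
  Matrix.of fun u e => if u.1 ∈ e.1 then 1 else 0
def rbD2 (key : ℤ × ℤ → α) (M : Finset (ℤ × ℤ)) : Matrix (rbC1 key M) (rbC2 key M) (ZMod 2) :=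
  Matrix.of fun e T => if e.1 ⊆ T.1 then 1 else 0

theorem rb_D1D2 {key : ℤ × ℤ → α} (hk : Function.Injective key) {M : Finset (ℤ × ℤ)} (h : rbConv key M) :
    rbD1 key M * rbD2 key M = 0 := by
  ext ⟨u, hu⟩ ⟨T, hT⟩
  obtain ⟨t, ht, htop, l, hl⟩ := rb_C2_top hT
  simp only [Matrix.mul_apply, rbD1, rbD2, Matrix.of_apply, Matrix.zero_apply]
  have e1 : ∑ e : rbC1 key M, ((if u ∈ e.1 then 1 else 0) * (if e.1 ⊆ T then 1 else 0) : ZMod 2)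
      = ∑ e ∈ rbC1 key M, (if (u ∈ e ∧ e ⊆ T) then 1 else 0 : ZMod 2) := by
    rw [← Finset.sum_coe_sort (rbC1 key M) (fun e => (if (u ∈ e ∧ e ⊆ T) then 1 else 0 : ZMod 2))]
    refine Finset.sum_congr rfl fun e _ => ?_
    by_cases h1 : u ∈ e.1 <;> by_cases h2 : e.1 ⊆ T <;> simp [h1, h2]
  rw [e1, Finset.sum_boole]
  by_cases huT : u ∈ T
  · have : (rbC1 key M).filter (fun e => u ∈ e ∧ e ⊆ T) = (T.erase u).image fun y => {u, y} := by
      ext e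
      simp only [Finset.mem_filter, Finset.mem_image, Finset.mem_erase]
      constructor
      · rintro ⟨he, hue, heT⟩
        rw [rb_mem_C1] at he
        obtain ⟨v, hv, k, hlt, rfl⟩ := he
        have hvT : v ∈ T := heT (by simp)
        have hwT : rbNb v k ∈ T := heT (by simp)
        simp only [Finset.mem_insert, Finset.mem_singleton] at hue
        rcases hue with rfl | rfl
        · exact ⟨_, ⟨rbNb_ne _ _, hwT⟩, rfl⟩
        · exact ⟨_, ⟨(rbNb_ne _ _).symm, hvT⟩, Finset.pair_comm _ _⟩
      · rintro ⟨y, ⟨hyu, hyT⟩, rfl⟩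
        obtain ⟨k, rfl⟩ := rbTri_adj (hl ▸ huT) (hl ▸ hyT) hyu
        refine ⟨rb_edge_C1 hk h hu ht (htop _ hyT), by simp, ?_⟩
        intro x hx
        simp only [Finset.mem_insert, Finset.mem_singleton] at hx
        rcases hx with rfl | rfl <;> assumption
    rw [this, Finset.card_image_of_injOn, Finset.card_erase_of_mem huT, hl, rbTri_card]
    · rfl
    · intro y hy z hz hyz
      have hyz' : ({u, y} : Finset (ℤ × ℤ)) = {u, z} := hyz
      have : y ∈ ({u, z} : Finset (ℤ × ℤ)) := by rw [← hyz']; simp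
      simp only [Finset.mem_insert, Finset.mem_singleton] at this
      rcases this with h | h
      · simp only [Finset.coe_erase, Set.mem_sdiff, Set.mem_singleton_iff] at hy; exact absurd h hy.2
      · exact h
  · have : (rbC1 key M).filter (fun e => u ∈ e ∧ e ⊆ T) = ∅ := by
      apply Finset.filter_eq_empty_iff.2
      rintro e _ ⟨h1, h2⟩; exact huT (h2 h1)
    rw [this]; simp

def rbExt {ι : Type*} [DecidableEq ι] {s : Finset ι} (f : s → ZMod 2) (x : ι) : ZMod 2 :=
  if h : x ∈ s then f ⟨x, h⟩ else 0

theorem rbExt_ne {ι : Type*} [DecidableEq ι] {s : Finset ι} {f : s → ZMod 2} {x : ι} (h : rbExt f x ≠ 0) : x ∈ s := by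
  by_contra h'; exact h (by simp [rbExt, h'])

theorem rbExt_sum {ι : Type*} [DecidableEq ι] {s : Finset ι} (f : s → ZMod 2) (p : ι → Prop) [DecidablePred p]
    {x y : ι} (hxy : x ≠ y) (hx : p x) (hy : p y) (h : ∀ z ∈ s, p z → z = x ∨ z = y) :
    ∑ z : s, (if p z.1 then 1 else 0) * f z = rbExt f x + rbExt f y := by
  have e1 : ∑ z : s, (if p z.1 then 1 else 0) * f z = ∑ z ∈ s, if p z then rbExt f z else 0 := by
    rw [← Finset.sum_coe_sort s (fun z => if p z then rbExt f z else 0)]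
    refine Finset.sum_congr rfl fun z _ => ?_
    simp [rbExt]
  rw [e1, ← Finset.sum_filter, ← Finset.sum_pair hxy]
  refine Finset.sum_subset ?_ ?_
  · intro z hz
    simp only [Finset.mem_filter] at hz
    simpa using h z hz.1 hz.2
  · intro z hz hz'
    by_contra h0
    apply hz'
    simp only [Finset.mem_filter]
    refine ⟨rbExt_ne h0, ?_⟩
    simp only [Finset.mem_insert, Finset.mem_singleton] at hz
    rcases hz with rfl | rfl <;> assumption

theorem rb_zmod2 {a b : ZMod 2} (h : a + b = 0) : a = b := by
  revert a b; decide

theorem rb_ker1 {key : ℤ × ℤ → α} {M : Finset (ℤ × ℤ)}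
    {φ : M → ZMod 2} (hφ : (rbD1 key M).transpose.mulVec φ = 0) {v : ℤ × ℤ} {k : Fin 6}
    (he : ({v, rbNb v k} : Finset (ℤ × ℤ)) ∈ rbC1 key M) : rbExt φ v = rbExt φ (rbNb v k) := by
  have := congrFun hφ ⟨_, he⟩
  simp only [Matrix.mulVec, dotProduct, Matrix.transpose_apply, rbD1, Matrix.of_apply, Pi.zero_apply] at this
  rw [rbExt_sum φ (fun u => u ∈ ({v, rbNb v k} : Finset (ℤ × ℤ))) (rbNb_ne v k).symm (by simp) (by simp)
    (by intro z _ hz; simpa using hz)] at this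
  exact rb_zmod2 this

theorem rb_ker2 {key : ℤ × ℤ → α} (hk : Function.Injective key) {M : Finset (ℤ × ℤ)} (h : rbConv key M)
    {S : rbC2 key M → ZMod 2} (hS : (rbD2 key M).mulVec S = 0) {v : ℤ × ℤ} (hv : v ∈ M) (k : Fin 6) :
    rbExt S (rbTri v k) = rbExt S (rbTri v (k + 5)) := by
  have hm : rbNb v k ∈ rbTri v (k + 5) := by
    have : k + 5 + 1 = k := by revert k; decide
    simp [rbTri, this]
  by_cases hA : ∃ z ∈ M, key (rbNb v k) ≤ key z
  · obtain ⟨z, hz, hle⟩ := hA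
    have he := rb_edge_C1 hk h hv hz hle
    have := congrFun hS ⟨_, he⟩
    simp only [Matrix.mulVec, dotProduct, rbD2, Matrix.of_apply, Pi.zero_apply] at this
    rw [rbExt_sum S (fun T => ({v, rbNb v k} : Finset (ℤ × ℤ)) ⊆ T) (x := rbTri v k) (y := rbTri v (k+5))] at this
    · exact rb_zmod2 this
    · intro h'; have h6 := rbTri_inj h'; have h7 : ∀ k : Fin 6, k ≠ k + 5 := by decide
      exact h7 k h6
    · intro x; simp only [rbTri, Finset.mem_insert, Finset.mem_singleton]; tauto
    · intro x hx
      simp only [Finset.mem_insert, Finset.mem_singleton] at hx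
      rcases hx with rfl | rfl
      · simp [rbTri]
      · exact hm
    · intro T hT hsub
      obtain ⟨t, _, _, l, rfl⟩ := rb_C2_top hT
      obtain ⟨l', hl'⟩ := rbTri_mem (hsub (by simp : v ∈ _))
      rw [hl'] at hsub ⊢
      rcases rbTri_edge (hsub (by simp : rbNb v k ∈ _)) with rfl | rfl
      · left; rfl
      · right; rfl
  · have hno : ∀ T, rbNb v k ∈ T → rbExt S T = 0 := by
      intro T hT
      by_contra h0
      obtain ⟨t, ht, htop, _⟩ := rb_C2_top (rbExt_ne h0)
      exact hA ⟨t, ht, htop _ hT⟩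
    rw [hno _ hm, hno]
    simp [rbTri]

theorem rb_ker2' {key : ℤ × ℤ → α} (hk : Function.Injective key) {M : Finset (ℤ × ℤ)} (h : rbConv key M)
    {S : rbC2 key M → ZMod 2} (hS : (rbD2 key M).mulVec S = 0) {v : ℤ × ℤ} (hv : v ∈ M) (k : Fin 6) :
    rbExt S (rbTri v k) = rbExt S (rbTri v 0) := by
  have a := rb_ker2 hk h hS hv
  have a1 := a 1; have a2 := a 2; have a3 := a 3; have a4 := a 4; have a5 := a 5
  simp only [show (1 : Fin 6) + 5 = 0 from rfl, show (2 : Fin 6) + 5 = 1 from rfl,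
    show (3 : Fin 6) + 5 = 2 from rfl, show (4 : Fin 6) + 5 = 3 from rfl, show (5 : Fin 6) + 5 = 4 from rfl] at a1 a2 a3 a4 a5
  fin_cases k
  · rfl
  · exact a1
  · exact a2.trans a1
  · exact a3.trans (a2.trans a1)
  · exact a4.trans (a3.trans (a2.trans a1))
  · exact a5.trans (a4.trans (a3.trans (a2.trans a1)))

theorem rb_ker2_adj {key : ℤ × ℤ → α} (hk : Function.Injective key) {M : Finset (ℤ × ℤ)} (h : rbConv key M)
    {S : rbC2 key M → ZMod 2} (hS : (rbD2 key M).mulVec S = 0) {v : ℤ × ℤ} (hv : v ∈ M) {k : Fin 6}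
    (hw : rbNb v k ∈ M) :
    rbExt S (rbTri v 0) = rbExt S (rbTri (rbNb v k) 0) := by
  rw [← rb_ker2' hk h hS hv k, ← rb_ker2' hk h hS hw (k+2), rbTri_rot]

theorem rb_finrank {ι : Type*} [Fintype ι] (K : Submodule (ZMod 2) (ι → ZMod 2)) (ev : (ι → ZMod 2) →ₗ[ZMod 2] ZMod 2)
    (h : ∀ S ∈ K, ev S = 0 → S = 0) :
    Module.finrank (ZMod 2) K ≤ 1 ∧ ((∀ S ∈ K, ev S = 0) → Module.finrank (ZMod 2) K = 0) := by
  constructor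
  · have : Function.Injective (ev.domRestrict K) := by
      rw [← LinearMap.ker_eq_bot, LinearMap.ker_eq_bot']
      rintro ⟨S, hS⟩ h0
      ext1; exact h S hS h0
    simpa using LinearMap.finrank_le_finrank_of_injective this
  · intro h0
    have : K = ⊥ := by
      rw [Submodule.eq_bot_iff]; intro S hS; exact h S hS (h0 S hS)
    rw [this]; simp

def rbExtL {ι : Type*} [DecidableEq ι] (s : Finset ι) (x : ι) : (s → ZMod 2) →ₗ[ZMod 2] ZMod 2 where
  toFun f := rbExt f x
  map_add' f g := by unfold rbExt; split_ifs <;> simp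
  map_smul' c f := by unfold rbExt; split_ifs <;> simp

theorem rb_euler {key : ℤ × ℤ → α} (hk : Function.Injective key) {M : Finset (ℤ × ℤ)} (h : rbConv key M)
    (C : Set (ℤ × ℤ)) (c0 : ℤ × ℤ) (hc0 : c0 ∈ M)
    (hreg : ∀ v ∈ M, v ∉ C → (∃ k, key (rbNb v k) < key v) ∧ (∃ k, key v < key (rbNb v k)))
    (hconn : ∀ P : ℤ × ℤ → Prop, P c0 → (∀ v ∈ M, ∀ k, rbNb v k ∈ M → P v → P (rbNb v k)) →
      ∀ v ∈ M, v ∈ C → P v) :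
    ∑ v ∈ M, rbInd key v ≤ 1 := by
  rw [rb_sum_ind hk]
  have hedge : ∀ v ∈ M, ∀ k, rbNb v k ∈ M → ({v, rbNb v k} : Finset (ℤ × ℤ)) ∈ rbC1 key M :=
    fun v hv k hw => rb_edge_C1 hk h hv hw le_rfl
  have z1 : ∀ φ ∈ LinearMap.ker ((rbD1 key M).transpose.mulVecLin), rbExtL M c0 φ = 0 → φ = 0 := by
    intro φ hφ h0
    have hφ' : (rbD1 key M).transpose.mulVec φ = 0 := by
      rw [LinearMap.mem_ker, Matrix.mulVecLin_apply] at hφ; exact hφ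
    have h0' : rbExt φ c0 = 0 := h0
    by_contra hne
    obtain ⟨⟨x, hx⟩, hx'⟩ := Function.ne_iff.1 hne
    obtain ⟨v, hv, hmin⟩ := (M.filter fun v => rbExt φ v ≠ 0).exists_min_image key
      ⟨x, by simp only [Finset.mem_filter]; exact ⟨hx, by simpa [rbExt, hx] using hx'⟩⟩
    simp only [Finset.mem_filter] at hv hmin
    have hvC : v ∉ C := by
      intro hC
      refine hv.2 (hconn (fun w => rbExt φ w = 0) h0' ?_ v hv.1 hC)
      intro w hw k hwk e
      rw [← rb_ker1 hφ' (hedge w hw k hwk)]; exact e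
    obtain ⟨k, hk'⟩ := (hreg v hv.1 hvC).1
    have e := rb_ker1 hφ' (rb_edge_C1 hk h hv.1 hv.1 hk'.le)
    have hne' : rbExt φ (rbNb v k) ≠ 0 := by rw [← e]; exact hv.2
    exact absurd (hmin _ ⟨rbExt_ne hne', hne'⟩) (not_le.2 hk')
  have z2 : ∀ S ∈ LinearMap.ker ((rbD2 key M).mulVecLin), rbExtL (rbC2 key M) (rbTri c0 0) S = 0 → S = 0 := by
    intro S hS h0
    have hS' : (rbD2 key M).mulVec S = 0 := by
      rw [LinearMap.mem_ker, Matrix.mulVecLin_apply] at hS; exact hS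
    have h0' : rbExt S (rbTri c0 0) = 0 := h0
    by_contra hne
    obtain ⟨⟨T, hT⟩, hx'⟩ := Function.ne_iff.1 hne
    obtain ⟨t, ht, htop, l, rfl⟩ := rb_C2_top hT
    obtain ⟨v, hv, hmin⟩ := (M.filter fun v => rbExt S (rbTri v 0) ≠ 0).exists_max_image key
      ⟨t, by
        simp only [Finset.mem_filter]
        refine ⟨ht, ?_⟩
        rw [← rb_ker2' hk h hS' ht l]
        simpa [rbExt, hT] using hx'⟩
    simp only [Finset.mem_filter] at hv hmin
    have hvC : v ∉ C := by
      intro hC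
      refine hv.2 (hconn (fun w => rbExt S (rbTri w 0) = 0) h0' ?_ v hv.1 hC)
      intro w hw k hwk e
      rw [← rb_ker2_adj hk h hS' hw hwk]; exact e
    obtain ⟨k, hk'⟩ := (hreg v hv.1 hvC).2
    have hvk : rbExt S (rbTri v k) ≠ 0 := by rw [rb_ker2' hk h hS' hv.1 k]; exact hv.2
    obtain ⟨z, hz, hztop, _⟩ := rb_C2_top (rbExt_ne hvk)
    have hwM : rbNb v k ∈ M := h.mem hv.1 hz hk'.le (hztop _ (by simp [rbTri]))
    have hne' : rbExt S (rbTri (rbNb v k) 0) ≠ 0 := by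
      rw [← rb_ker2_adj hk h hS' hv.1 hwM]; exact hv.2
    exact absurd (hmin _ ⟨hwM, hne'⟩) (not_le.2 hk')
  have f1 := rb_finrank _ _ z1
  have f2 := rb_finrank _ _ z2
  have r1 := LinearMap.finrank_range_add_finrank_ker ((rbD1 key M).transpose.mulVecLin)
  have r2 := LinearMap.finrank_range_add_finrank_ker ((rbD2 key M).mulVecLin)
  have r3 := Matrix.rank_add_rank_le_card_of_mul_eq_zero (rb_D1D2 hk h)
  have r4 := Matrix.rank_transpose (rbD1 key M)
  unfold Matrix.rank at r3 r4
  simp only [Module.finrank_fintype_fun_eq_card, Fintype.card_coe] at r1 r2 r3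
  have hnot : (∀ φ ∈ LinearMap.ker ((rbD1 key M).transpose.mulVecLin), rbExtL M c0 φ = 0) ∨
     (∀ S ∈ LinearMap.ker ((rbD2 key M).mulVecLin), rbExtL (rbC2 key M) (rbTri c0 0) S = 0) := by
    by_contra hcon
    push Not at hcon
    obtain ⟨⟨φ, hφ, hφ0⟩, S, hS, hS0⟩ := hcon
    have hφ' : (rbD1 key M).transpose.mulVec φ = 0 := by
      rw [LinearMap.mem_ker, Matrix.mulVecLin_apply] at hφ; exact hφ
    have hS' : (rbD2 key M).mulVec S = 0 := by
      rw [LinearMap.mem_ker, Matrix.mulVecLin_apply] at hS; exact hS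
    obtain ⟨v, hv, hmax⟩ := (M.filter fun v => rbExt φ v ≠ 0 ∧ rbExt S (rbTri v 0) ≠ 0).exists_max_image
      (fun v => v.1) ⟨c0, by simp only [Finset.mem_filter]; exact ⟨hc0, hφ0, hS0⟩⟩
    simp only [Finset.mem_filter] at hv hmax
    have hwM : rbNb v 0 ∈ M := by
      rcases lt_or_ge (key (rbNb v 0)) (key v) with h1 | h1
      · have e := rb_ker1 hφ' (rb_edge_C1 hk h hv.1 hv.1 h1.le)
        exact rbExt_ne (by rw [← e]; exact hv.2.1)
      · obtain ⟨z, hz, hztop, _⟩ := rb_C2_top (rbExt_ne hv.2.2)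
        exact h.mem hv.1 hz h1 (hztop _ (by simp [rbTri]))
    have := hmax (rbNb v 0) ⟨hwM, by rw [← rb_ker1 hφ' (hedge v hv.1 0 hwM)]; exact hv.2.1,
      by rw [← rb_ker2_adj hk h hS' hv.1 hwM]; exact hv.2.2⟩
    simp [rbNb, rbDir] at this
  rcases hnot with hn | hn
  · have := f1.2 hn; have := f2.1; omega
  · have := f2.2 hn; have := f1.1; omega

end euler

def rbPL (F : ℤ × ℤ → ℝ) (h : ℝ) (v : ℤ × ℤ) : ℂ :=
  ⟨(F (v.1 + 1, v.2) - F v) / h, (F (v.1 + 1, v.2 + 1) - F (v.1 + 1, v.2)) / h⟩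
def rbPU (F : ℤ × ℤ → ℝ) (h : ℝ) (v : ℤ × ℤ) : ℂ :=
  ⟨(F (v.1 + 1, v.2 + 1) - F (v.1, v.2 + 1)) / h, (F (v.1, v.2 + 1) - F v) / h⟩

def rbTurn (aL aU : ℤ × ℤ → ℂ) (v : ℤ × ℤ) : ℝ :=
  rbTurn6 (aL v) (aU v) (aL (v.1 - 1, v.2)) (aU (v.1 - 1, v.2 - 1)) (aL (v.1 - 1, v.2 - 1))
    (aU (v.1, v.2 - 1))

theorem rb_tele (f : ℤ → ℝ) (a : ℤ) (n : ℕ) :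
    ∑ i ∈ Finset.Ioc a (a + n), (f i - f (i - 1)) = f (a + n) - f a := by
  induction n with
  | zero => simp
  | succ k ih =>
    have : Finset.Ioc a (a + (k + 1 : ℕ)) = insert (a + (k + 1 : ℕ)) (Finset.Ioc a (a + k)) := by
      ext x; simp only [Finset.mem_Ioc, Finset.mem_insert]; push_cast; omega
    rw [this, Finset.sum_insert (by simp), ih]
    have e : a + ((k + 1 : ℕ) : ℤ) - 1 = a + k := by push_cast; ring
    rw [e]; ring

theorem rb_tele2 (f : ℤ → ℝ) (m : ℕ) :
    ∑ i ∈ Finset.Ioc (-m : ℤ) m, (f i - f (i - 1)) = f m - f (-m) := by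
  have := rb_tele f (-m) (2 * m)
  rw [show (-m + ((2 * m : ℕ) : ℤ)) = m by push_cast; ring] at this
  exact this

theorem rb_box_sum (aL aU : ℤ × ℤ → ℂ) (m : ℕ) :
    ∑ v ∈ Finset.Ioc (-m : ℤ) m ×ˢ Finset.Ioc (-m : ℤ) m, rbTurn aL aU v =
      ∑ j ∈ Finset.Ioc (-m : ℤ) m,
        (((aL (m, j) / aU (m, j - 1)).arg + (aU (m, j) / aL (m, j)).arg) -
         ((aL (-m, j) / aU (-m, j - 1)).arg + (aU (-m, j) / aL (-m, j)).arg)) +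
      ∑ i ∈ Finset.Ioc (-m : ℤ) m,
        (((aL (i - 1, m) / aU (i, m)).arg + (aU (i - 1, m) / aL (i - 1, m)).arg) -
         ((aL (i - 1, -m) / aU (i, -m)).arg + (aU (i - 1, -m) / aL (i - 1, -m)).arg)) := by
  have e : ∀ v : ℤ × ℤ, rbTurn aL aU v =
      ((fun i => ((aL (i, v.2) / aU (i, v.2 - 1)).arg + (aU (i, v.2) / aL (i, v.2)).arg)) v.1 -
       (fun i => ((aL (i, v.2) / aU (i, v.2 - 1)).arg + (aU (i, v.2) / aL (i, v.2)).arg)) (v.1 - 1)) +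
      ((fun j => ((aL (v.1 - 1, j) / aU (v.1, j)).arg + (aU (v.1 - 1, j) / aL (v.1 - 1, j)).arg)) v.2 -
       (fun j => ((aL (v.1 - 1, j) / aU (v.1, j)).arg + (aU (v.1 - 1, j) / aL (v.1 - 1, j)).arg)) (v.2 - 1)) := by
    intro v
    simp only [rbTurn, rbTurn6]
    ring
  rw [Finset.sum_congr rfl fun v _ => e v, Finset.sum_add_distrib]
  congr 1
  · rw [Finset.sum_product_right]
    refine Finset.sum_congr rfl fun j _ => ?_
    exact rb_tele2 (fun i => ((aL (i, j) / aU (i, j - 1)).arg + (aU (i, j) / aL (i, j)).arg)) m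
  · rw [Finset.sum_product]
    refine Finset.sum_congr rfl fun i _ => ?_
    exact rb_tele2 (fun j => ((aL (i - 1, j) / aU (i, j)).arg + (aU (i - 1, j) / aL (i - 1, j)).arg)) m

theorem rb_bool_count (b : Fin 6 → Bool) :
    2 * ((Finset.univ.filter fun k => b k = true).card : ℤ)
      - 2 * (Finset.univ.filter fun k => b k = true ∧ b (k + 1) = true).card =
    (if b 0 = b 1 then 0 else 1) + (if b 1 = b 2 then 0 else 1) + (if b 2 = b 3 then 0 else 1)
      + (if b 3 = b 4 then 0 else 1) + (if b 4 = b 5 then 0 else 1) + (if b 5 = b 0 then 0 else 1) := by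
  revert b; decide

theorem rb_bool_reg (b : Fin 6 → Bool) (k : Fin 6) (h0 : b k = false) (h1 : b (k + 1) = false)
    (h3 : b (k + 3) = true) (h4 : b (k + 4) = true) :
    1 - ((Finset.univ.filter fun k => b k = true).card : ℤ)
      + (Finset.univ.filter fun k => b k = true ∧ b (k + 1) = true).card = 0 := by
  revert b k; decide

theorem rb_ind_bool {α : Type*} [LinearOrder α] (key : ℤ × ℤ → α) (v : ℤ × ℤ) :
    rbInd key v = 1 - ((Finset.univ.filter fun k : Fin 6 => decide (key (rbNb v k) < key v) = true).card : ℤ)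
      + (Finset.univ.filter fun k : Fin 6 => decide (key (rbNb v k) < key v) = true ∧
          decide (key (rbNb v (k + 1)) < key v) = true).card := by
  simp only [rbInd, decide_eq_true_eq]

theorem rb_ind_reg {α : Type*} [LinearOrder α] (key : ℤ × ℤ → α) (v : ℤ × ℤ) (k : Fin 6)
    (h0 : key v < key (rbNb v k)) (h1 : key v < key (rbNb v (k + 1)))
    (h3 : key (rbNb v (k + 3)) < key v) (h4 : key (rbNb v (k + 4)) < key v) : rbInd key v = 0 := by
  rw [rb_ind_bool]
  exact rb_bool_reg (fun k => decide (key (rbNb v k) < key v)) k (by simp [h0.le]) (by simp [h1.le])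
    (by simp [h3]) (by simp [h4])

theorem rb_turn_ind (F : ℤ × ℤ → ℝ) {h : ℝ} (hh : 0 < h) (v : ℤ × ℤ)
    (hne : ∀ k, F (rbNb v k) ≠ F v) :
    rbTurn (rbPL F h) (rbPU F h) v = 2 * Real.pi * rbInd F v := by
  obtain ⟨i, j⟩ := v
  have n : ∀ k, (F (rbNb (i, j) k) - F (i, j)) / h ≠ 0 := fun k =>
    div_ne_zero (sub_ne_zero.2 (hne k)) hh.ne'
  have e0 : rbNb (i, j) 0 = (i + 1, j) := by simp [rbNb, rbDir]
  have e1 : rbNb (i, j) 1 = (i + 1, j + 1) := by simp [rbNb, rbDir]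
  have e2 : rbNb (i, j) 2 = (i, j + 1) := by simp [rbNb, rbDir]
  have e3 : rbNb (i, j) 3 = (i - 1, j) := by simp [rbNb, rbDir, sub_eq_add_neg]
  have e4 : rbNb (i, j) 4 = (i - 1, j - 1) := by simp [rbNb, rbDir, sub_eq_add_neg]
  have e5 : rbNb (i, j) 5 = (i, j - 1) := by simp [rbNb, rbDir, sub_eq_add_neg]
  have n0 := n 0; have n1 := n 1; have n2 := n 2; have n3 := n 3; have n4 := n 4; have n5 := n 5
  unfold rbTurn
  rw [rb_turn_pl n0 n1 n2 n3 n4 n5]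
  · have hX : ∀ k l, rbX ((F (rbNb (i, j) k) - F (i, j)) / h) ((F (rbNb (i, j) l) - F (i, j)) / h) =
        (((if decide (F (rbNb (i, j) k) < F (i, j)) = decide (F (rbNb (i, j) l) < F (i, j)) then 0 else 1 : ℤ)) : ℝ) := by
      intro k l
      have hs : ∀ x y : ℝ, (x - y) / h < 0 ↔ x < y := by
        intro x y; rw [div_lt_iff₀ hh, zero_mul, sub_neg]
      simp only [rbX, hs, decide_eq_decide]
      split_ifs <;> simp
    simp only [hX]
    have := rb_bool_count (fun k => decide (F (rbNb (i, j) k) < F (i, j)))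
    have hi := rb_ind_bool F (i, j)
    have h2 : 2 * rbInd F (i, j) = 2 - ((if decide (F (rbNb (i, j) 0) < F (i, j)) = decide (F (rbNb (i, j) 1) < F (i, j)) then 0 else 1)
      + (if decide (F (rbNb (i, j) 1) < F (i, j)) = decide (F (rbNb (i, j) 2) < F (i, j)) then 0 else 1)
      + (if decide (F (rbNb (i, j) 2) < F (i, j)) = decide (F (rbNb (i, j) 3) < F (i, j)) then 0 else 1)
      + (if decide (F (rbNb (i, j) 3) < F (i, j)) = decide (F (rbNb (i, j) 4) < F (i, j)) then 0 else 1)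
      + (if decide (F (rbNb (i, j) 4) < F (i, j)) = decide (F (rbNb (i, j) 5) < F (i, j)) then 0 else 1)
      + (if decide (F (rbNb (i, j) 5) < F (i, j)) = decide (F (rbNb (i, j) 0) < F (i, j)) then 0 else 1)) := by
      rw [← this, hi]; ring
    have h3 := congrArg (fun z : ℤ => (z : ℝ)) h2
    simp only [Int.cast_sub, Int.cast_add, Int.cast_mul, Int.cast_ofNat] at h3
    linear_combination (-Real.pi) * h3
  all_goals simp only [rbPL, rbPU, e0, e1, e2, e3, e4, e5, sub_add_cancel]
  all_goals try ring

/-- sector lemma -/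
theorem rb_sector (p q δ : ℝ) (hδ : 0 ≤ δ) (h : 4 * δ < |p| + |q|) (ℓ : Fin 6 → ℝ)
    (l0 : ℓ 0 = p) (l1 : ℓ 1 = p + q) (l2 : ℓ 2 = q) (l3 : ℓ 3 = -p) (l4 : ℓ 4 = -p - q) (l5 : ℓ 5 = -q) :
    ∃ k, δ < ℓ k ∧ δ < ℓ (k + 1) ∧ ℓ (k + 3) < -δ ∧ ℓ (k + 4) < -δ := by
  have key : (δ < p ∧ δ < p + q) ∨ (δ < p + q ∧ δ < q) ∨ (δ < q ∧ δ < -p) ∨ (δ < -p ∧ δ < -p - q) ∨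
      (δ < -p - q ∧ δ < - q) ∨ (δ < -q ∧ δ < p) := by
    rcases abs_cases p with ⟨hp, hp'⟩ | ⟨hp, hp'⟩ <;> rcases abs_cases q with ⟨hq, hq'⟩ | ⟨hq, hq'⟩ <;>
      rw [hp, hq] at h <;> grind
  rcases key with h | h | h | h | h | h
  · refine ⟨0, ?_, ?_, ?_, ?_⟩
    · rw [l0]; linarith
    · show δ < ℓ 1; rw [l1]; linarith
    · show ℓ 3 < _; rw [l3]; linarith
    · show ℓ 4 < _; rw [l4]; linarith
  · refine ⟨1, ?_, ?_, ?_, ?_⟩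
    · rw [l1]; linarith
    · show δ < ℓ 2; rw [l2]; linarith
    · show ℓ 4 < _; rw [l4]; linarith
    · show ℓ 5 < _; rw [l5]; linarith
  · refine ⟨2, ?_, ?_, ?_, ?_⟩
    · rw [l2]; linarith
    · show δ < ℓ 3; rw [l3]; linarith
    · show ℓ 5 < _; rw [l5]; linarith
    · show ℓ 0 < _; rw [l0]; linarith
  · refine ⟨3, ?_, ?_, ?_, ?_⟩
    · rw [l3]; linarith
    · show δ < ℓ 4; rw [l4]; linarith
    · show ℓ 0 < _; rw [l0]; linarith
    · show ℓ 1 < _; rw [l1]; linarith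
  · refine ⟨4, ?_, ?_, ?_, ?_⟩
    · rw [l4]; linarith
    · show δ < ℓ 5; rw [l5]; linarith
    · show ℓ 1 < _; rw [l1]; linarith
    · show ℓ 2 < _; rw [l2]; linarith
  · refine ⟨5, ?_, ?_, ?_, ?_⟩
    · rw [l5]; linarith
    · show δ < ℓ 0; rw [l0]; linarith
    · show ℓ 2 < _; rw [l2]; linarith
    · show ℓ 3 < _; rw [l3]; linarith

def rbT (F χ : ℤ × ℤ → ℝ) (c η : ℝ) (w : ℤ × ℤ) : ℝ :=
  if 0 < χ w then max (-η) (min η ((F w - c) / χ w)) else if F w ≤ c then -η else η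

theorem rbT_lt {F χ : ℤ × ℤ → ℝ} {c η τ : ℝ} (hχ : ∀ w, 0 ≤ χ w) (h1 : -η < τ) {w : ℤ × ℤ}
    (h : F w - c - τ * χ w < 0) : rbT F χ c η w < τ := by
  unfold rbT
  split_ifs with a b
  · refine max_lt h1 (lt_of_le_of_lt (min_le_right _ _) ?_)
    rw [div_lt_iff₀ a]; linarith
  · exact h1
  · have : χ w = 0 := le_antisymm (not_lt.1 a) (hχ w)
    rw [this] at h; exact absurd (by linarith) b

theorem rbT_gt {F χ : ℤ × ℤ → ℝ} {c η τ : ℝ} (hχ : ∀ w, 0 ≤ χ w) (h1 : τ < η) {w : ℤ × ℤ}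
    (h : 0 < F w - c - τ * χ w) : τ < rbT F χ c η w := by
  unfold rbT
  split_ifs with a b
  · refine lt_of_lt_of_le (lt_min h1 ?_) (le_max_right _ _)
    rw [lt_div_iff₀ a]; linarith
  · have : χ w = 0 := le_antisymm (not_lt.1 a) (hχ w)
    rw [this] at h; linarith
  · exact h1

theorem rb_cluster (F χ : ℤ × ℤ → ℝ) (c η : ℝ) (hη : 0 < η) (hχ : ∀ w, 0 ≤ χ w)
    (B : Finset (ℤ × ℤ)) (hB : ∀ w, 0 < χ w → w ∈ B) (Cl : Finset (ℤ × ℤ))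
    (hC1 : ∀ v ∈ Cl, χ v = 1) (hC2 : ∀ v ∈ Cl, ∀ k, χ (rbNb v k) = 1)
    (hC3 : ∀ v ∈ Cl, ∀ k, F (rbNb v k) ≠ F v) (hC4 : ∀ v ∈ Cl, |F v - c| < η)
    (hreg : ∀ v, v ∉ Cl → 0 < χ v → ∀ τ, |τ| < η → F v - c - τ * χ v = 0 →
      ∃ k, 0 < F (rbNb v k) - c - τ * χ (rbNb v k) ∧ 0 < F (rbNb v (k+1)) - c - τ * χ (rbNb v (k+1)) ∧
        F (rbNb v (k+3)) - c - τ * χ (rbNb v (k+3)) < 0 ∧ F (rbNb v (k+4)) - c - τ * χ (rbNb v (k+4)) < 0)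
    (c0 : ℤ × ℤ) (hc0 : c0 ∈ Cl)
    (hconn : ∀ P : ℤ × ℤ → Prop, P c0 → (∀ v ∈ Cl, ∀ k, rbNb v k ∈ Cl → P v → P (rbNb v k)) →
      ∀ v ∈ Cl, P v) :
    ∑ v ∈ Cl, rbInd F v ≤ 1 := by
  classical
  set T := rbT F χ c η with hT
  set key : ℤ × ℤ → ℝ ×ₗ (ℤ ×ₗ ℤ) := fun w => toLex (T w, toLex w) with hkey
  have hk : Function.Injective key := by
    intro a b h
    have h1 := congrArg (fun z => (ofLex z).2) h
    exact h1
  have klt : ∀ {a b}, T a < T b → key a < key b := by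
    intro a b h
    exact Prod.Lex.toLex_lt_toLex.2 (Or.inl h)
  set M := B.filter fun w => -η < T w ∧ T w < η with hM
  have hmem : ∀ w, w ∈ M ↔ (0 < χ w ∧ -η < T w ∧ T w < η) := by
    intro w
    rw [hM, Finset.mem_filter]
    constructor
    · rintro ⟨_, h⟩
      refine ⟨?_, h⟩
      by_contra h0
      have : T w = -η ∨ T w = η := by
        rw [hT]; unfold rbT; rw [if_neg h0]; split_ifs <;> simp
      rcases this with e | e <;> rw [e] at h <;> linarith [h.1, h.2]
    · rintro ⟨h0, h⟩; exact ⟨hB w h0, h⟩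
  have hbd : ∀ w, w ∉ M → T w = -η ∨ T w = η := by
    intro w hw
    by_cases h0 : 0 < χ w
    · rw [hmem] at hw
      have h1 : -η ≤ T w := by rw [hT]; unfold rbT; rw [if_pos h0]; exact le_max_left _ _
      have h2 : T w ≤ η := by
        rw [hT]; unfold rbT; rw [if_pos h0]; exact max_le (by linarith) (min_le_left _ _)
      by_contra hcon
      push Not at hcon
      exact hw ⟨h0, lt_of_le_of_ne h1 hcon.1.symm, lt_of_le_of_ne h2 hcon.2⟩
    · rw [hT]; unfold rbT; rw [if_neg h0]; split_ifs <;> simp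
  have hconv : rbConv key M := by
    intro w hw
    rcases hbd w hw with h | h
    · left; intro v hv; apply klt; rw [h]; exact ((hmem v).1 hv).2.1
    · right; intro v hv; apply klt; rw [h]; exact ((hmem v).1 hv).2.2
  have hClT : ∀ v ∈ Cl, T v = F v - c := by
    intro v hv
    have := abs_lt.1 (hC4 v hv)
    rw [hT]; unfold rbT; rw [if_pos (by rw [hC1 v hv]; exact one_pos), hC1 v hv, div_one,
      min_eq_right this.2.le, max_eq_right this.1.le]
  have hClM : Cl ⊆ M := by
    intro v hv
    have := abs_lt.1 (hC4 v hv)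
    rw [hmem, hClT v hv, hC1 v hv]; exact ⟨one_pos, this⟩
  have hreg' : ∀ v ∈ M, v ∉ Cl → ∃ k, key v < key (rbNb v k) ∧ key v < key (rbNb v (k+1)) ∧
      key (rbNb v (k+3)) < key v ∧ key (rbNb v (k+4)) < key v := by
    intro v hv hvC
    obtain ⟨h0, h1, h2⟩ := (hmem v).1 hv
    have hval : F v - c - T v * χ v = 0 := by
      have e : T v = (F v - c) / χ v := by
        have e1 : T v = max (-η) (min η ((F v - c) / χ v)) := by rw [hT]; unfold rbT; rw [if_pos h0]
        rw [e1] at h1 h2 ⊢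
        rcases max_cases (-η) (min η ((F v - c) / χ v)) with ⟨a, b⟩ | ⟨a, b⟩
        · rw [a] at h1; linarith
        · rw [a] at h2 ⊢
          rcases min_cases η ((F v - c) / χ v) with ⟨a', b'⟩ | ⟨a', b'⟩
          · rw [a'] at h2; linarith
          · exact a'
      rw [e]; field_simp; ring
    obtain ⟨k, g0, g1, g3, g4⟩ := hreg v hvC h0 (T v) (abs_lt.2 ⟨h1, h2⟩) hval
    exact ⟨k, klt (rbT_gt hχ h2 g0), klt (rbT_gt hχ h2 g1), klt (rbT_lt hχ h1 g3), klt (rbT_lt hχ h1 g4)⟩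
  have main := rb_euler hk hconv (Cl : Set (ℤ × ℤ)) c0 (hClM hc0)
    (by
      intro v hv hvC
      obtain ⟨k, g0, _, g3, _⟩ := hreg' v hv hvC
      exact ⟨⟨_, g3⟩, ⟨_, g0⟩⟩)
    (by
      intro P h0 hs v _ hv
      exact hconn P h0 (fun v hv k hk' => hs v (hClM hv) k (hClM hk')) v hv)
  rw [← Finset.sum_subset hClM (f := rbInd key)] at main
  · rw [Finset.sum_congr rfl fun v hv => ?_]
    · exact main
    · have : ∀ k, key (rbNb v k) < key v ↔ F (rbNb v k) < F v := by
        intro k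
        have hb := abs_lt.1 (hC4 v hv)
        rcases lt_trichotomy (F (rbNb v k)) (F v) with h | h | h
        · refine iff_of_true (klt ?_) h
          rw [hClT v hv]
          refine rbT_lt hχ hb.1 ?_
          rw [hC2 v hv k]; linarith
        · exact absurd h (hC3 v hv k)
        · refine iff_of_false (not_lt.2 (klt ?_).le) (not_lt.2 h.le)
          rw [hClT v hv]
          refine rbT_gt hχ hb.2 ?_
          rw [hC2 v hv k]; linarith
      simp only [rbInd, this]
  · intro v hv hvC
    obtain ⟨k, g0, g1, g3, g4⟩ := hreg' v hv (by simpa using hvC)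
    exact rb_ind_reg key v k g0 g1 g3 g4

/-- a lattice box is connected -/
theorem rb_box_conn (a b c d : ℤ) (hab : a ≤ b) (hcd : c ≤ d) (P : ℤ × ℤ → Prop) (h0 : P (a, c))
    (hs : ∀ v ∈ Finset.Icc a b ×ˢ Finset.Icc c d, ∀ k, rbNb v k ∈ Finset.Icc a b ×ˢ Finset.Icc c d →
      P v → P (rbNb v k)) : ∀ v ∈ Finset.Icc a b ×ˢ Finset.Icc c d, P v := by
  have hx : ∀ n : ℕ, a + n ≤ b → P (a + n, c) := by
    intro n
    induction n with
    | zero => intro _; simpa using h0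
    | succ n ih =>
      intro hn
      push_cast at hn
      have e : rbNb (a + n, c) 0 = (a + (n + 1 : ℕ), c) := by
        simp [rbNb, rbDir, add_assoc]
      rw [← e]
      refine hs _ ?_ _ ?_ (ih (by omega))
      · simp only [Finset.mem_product, Finset.mem_Icc]; omega
      · rw [e]; simp only [Finset.mem_product, Finset.mem_Icc]; push_cast; omega
  have hy : ∀ n m : ℕ, a + n ≤ b → c + m ≤ d → P (a + n, c + m) := by
    intro n m
    induction m with
    | zero => intro h _; simpa using hx n h
    | succ m ih =>
      intro hn hm
      push_cast at hm
      have e : rbNb (a + n, c + m) 2 = (a + n, c + (m + 1 : ℕ)) := by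
        simp [rbNb, rbDir, add_assoc]
      rw [← e]
      refine hs _ ?_ _ ?_ (ih hn (by omega))
      · simp only [Finset.mem_product, Finset.mem_Icc]; omega
      · rw [e]; simp only [Finset.mem_product, Finset.mem_Icc]; push_cast; omega
  rintro ⟨x, y⟩ hv
  simp only [Finset.mem_product, Finset.mem_Icc] at hv
  have := hy (x - a).toNat (y - c).toNat (by omega) (by omega)
  rw [Int.toNat_of_nonneg (by omega), Int.toNat_of_nonneg (by omega)] at this
  simpa using this

def rbG (u : ℂ → ℝ) (z : ℂ) : ℂ := ⟨fderiv ℝ u z 1, fderiv ℝ u z Complex.I⟩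
def rbV (u : ℂ → ℝ) (z : ℂ) : ℂ := rbG u (((max 1 ‖z‖)⁻¹ : ℝ) • z)
def rbZ (h : ℝ) (v : ℤ × ℤ) : ℂ := ⟨h * v.1, h * v.2⟩
def rbAL (u : ℂ → ℝ) (F : ℤ × ℤ → ℝ) (h : ℝ) (v : ℤ × ℤ) : ℂ :=
  if ‖rbZ h v‖ < 1 then rbPL F h v else rbV u (rbZ h v)
def rbAU (u : ℂ → ℝ) (F : ℤ × ℤ → ℝ) (h : ℝ) (v : ℤ × ℤ) : ℂ :=
  if ‖rbZ h v‖ < 1 then rbPU F h v else rbV u (rbZ h v)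

theorem rbV_eq (u : ℂ → ℝ) {z : ℂ} (hz : ‖z‖ ≤ 1) : rbV u z = rbG u z := by
  unfold rbV; rw [max_eq_left hz]; simp

theorem rbG_app (u : ℂ → ℝ) (z w : ℂ) : fderiv ℝ u z w = w.re * (rbG u z).re + w.im * (rbG u z).im := by
  have : w = w.re • (1 : ℂ) + w.im • Complex.I := by
    apply Complex.ext <;> simp
  conv_lhs => rw [this]
  rw [map_add, map_smul, map_smul]; simp [rbG]

theorem rb_norm_le (z : ℂ) : ‖z‖ ≤ |z.re| + |z.im| := Complex.norm_le_abs_re_add_abs_im z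

theorem rbZ_dist (h : ℝ) (hh : 0 ≤ h) (v w : ℤ × ℤ) (h1 : |w.1 - v.1| ≤ 1) (h2 : |w.2 - v.2| ≤ 1) :
    ‖rbZ h w - rbZ h v‖ ≤ 2 * h := by
  refine (rb_norm_le _).trans ?_
  simp only [rbZ, Complex.sub_re, Complex.sub_im]
  rw [← mul_sub, ← mul_sub, abs_mul, abs_mul, abs_of_nonneg hh]
  have a : |((w.1 : ℝ) - v.1)| ≤ 1 := by exact_mod_cast h1
  have b : |((w.2 : ℝ) - v.2)| ≤ 1 := by exact_mod_cast h2
  nlinarith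

theorem rbNb_near (v : ℤ × ℤ) (k : Fin 6) : |(rbNb v k).1 - v.1| ≤ 1 ∧ |(rbNb v k).2 - v.2| ≤ 1 := by
  have : ∀ k, |(rbDir k).1| ≤ 1 ∧ |(rbDir k).2| ≤ 1 := by decide
  simpa [rbNb] using this k

theorem rb_clip (a b : ℝ) : |max 0 (min 1 a) - max 0 (min 1 b)| ≤ |a - b| := by
  refine (abs_max_sub_max_le_max _ _ _ _).trans ?_
  simp only [sub_self, abs_zero]
  refine max_le (abs_nonneg _) ?_
  refine (abs_min_sub_min_le_max _ _ _ _).trans ?_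
  simp

theorem rb_nb_lin (u : ℂ → ℝ) (h : ℝ) (v : ℤ × ℤ) (k : Fin 6) :
    fderiv ℝ u (rbZ h v) (rbZ h (rbNb v k) - rbZ h v) =
      h * ((rbDir k).1 * (rbG u (rbZ h v)).re + (rbDir k).2 * (rbG u (rbZ h v)).im) := by
  rw [rbG_app]
  simp only [rbZ, rbNb, Complex.sub_re, Complex.sub_im, Prod.fst_add, Prod.snd_add]
  push_cast; ring

section core
variable {u : ℂ → ℝ} {F : ℤ × ℤ → ℝ} {h e : ℝ}

theorem rb_pl_close (hh : 0 < h) {v : ℤ × ℤ}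
    (hest : ∀ k, |F (rbNb v k) - F v - fderiv ℝ u (rbZ h v) (rbZ h (rbNb v k) - rbZ h v)| ≤ e * h) :
    ‖rbPL F h v - rbG u (rbZ h v)‖ ≤ 3 * e ∧ ‖rbPU F h v - rbG u (rbZ h v)‖ ≤ 3 * e := by
  have d : ∀ x y E : ℝ, |x - h * y| ≤ E * h → |x / h - y| ≤ E := by
    intro x y E hx
    have : x / h - y = (x - h * y) / h := by field_simp
    rw [this, abs_div, abs_of_pos hh, div_le_iff₀ hh]; exact hx
  have h0 := hest 0; have h1 := hest 1; have h2 := hest 2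
  rw [rb_nb_lin] at h0 h1 h2
  have e0 : rbNb v 0 = (v.1 + 1, v.2) := by ext <;> simp [rbNb, rbDir]
  have e1 : rbNb v 1 = (v.1 + 1, v.2 + 1) := by ext <;> simp [rbNb, rbDir]
  have e2 : rbNb v 2 = (v.1, v.2 + 1) := by ext <;> simp [rbNb, rbDir]
  rw [e0] at h0; rw [e1] at h1; rw [e2] at h2
  simp only [rbDir, Matrix.cons_val] at h0 h1 h2
  push_cast at h0 h1 h2
  rw [abs_le] at h0 h1 h2
  constructor
  · refine (rb_norm_le _).trans ?_
    have a : |(rbPL F h v - rbG u (rbZ h v)).re| ≤ e := by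
      rw [Complex.sub_re]; apply d; rw [abs_le]; constructor <;> linarith
    have b : |(rbPL F h v - rbG u (rbZ h v)).im| ≤ 2 * e := by
      rw [Complex.sub_im]; apply d; rw [abs_le]; constructor <;> linarith
    linarith
  · refine (rb_norm_le _).trans ?_
    have a : |(rbPU F h v - rbG u (rbZ h v)).re| ≤ 2 * e := by
      rw [Complex.sub_re]; apply d; rw [abs_le]; constructor <;> linarith
    have b : |(rbPU F h v - rbG u (rbZ h v)).im| ≤ e := by
      rw [Complex.sub_im]; apply d; rw [abs_le]; constructor <;> linarith
    linarith

theorem rb_turn_noncl (hh : 0 < h) (hh2 : h ≤ 1 / 4) (he : 0 ≤ e)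
    (hest : ∀ v, ‖rbZ h v‖ ≤ 4 → ∀ k, |F (rbNb v k) - F v - fderiv ℝ u (rbZ h v) (rbZ h (rbNb v k) - rbZ h v)| ≤ e * h)
    (hVc : ∀ z w : ℂ, ‖z‖ ≤ 4 → ‖w‖ ≤ 4 → ‖z - w‖ ≤ 4 * h → ‖rbV u z - rbV u w‖ ≤ e)
    {v : ℤ × ℤ} (hv : ‖rbZ h v‖ ≤ 3) (hg : 4 * e < ‖rbV u (rbZ h v)‖) :
    rbTurn (rbAL u F h) (rbAU u F h) v = 0 := by
  have key : ∀ w : ℤ × ℤ, |w.1 - v.1| ≤ 1 → |w.2 - v.2| ≤ 1 →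
      0 < (rbAL u F h w / rbV u (rbZ h v)).re ∧ 0 < (rbAU u F h w / rbV u (rbZ h v)).re := by
    intro w h1 h2
    have hd := rbZ_dist h hh.le v w h1 h2
    have hw : ‖rbZ h w‖ ≤ 4 := by
      have : rbZ h w = (rbZ h w - rbZ h v) + rbZ h v := by ring
      rw [this]; refine (norm_add_le _ _).trans ?_; linarith
    have hc := hVc (rbZ h w) (rbZ h v) hw (by linarith) (by linarith)
    unfold rbAL rbAU
    split_ifs with hw1
    · have hp := rb_pl_close hh (hest w hw)
      rw [rbV_eq u hw1.le] at hc
      constructor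
      · apply rb_re_pos
        have := norm_add_le (rbPL F h w - rbG u (rbZ h w)) (rbG u (rbZ h w) - rbV u (rbZ h v))
        rw [sub_add_sub_cancel] at this; linarith
      · apply rb_re_pos
        have := norm_add_le (rbPU F h w - rbG u (rbZ h w)) (rbG u (rbZ h w) - rbV u (rbZ h v))
        rw [sub_add_sub_cancel] at this; linarith
    · constructor <;> (apply rb_re_pos; linarith)
  unfold rbTurn
  apply rb_turn_reg (c := rbV u (rbZ h v))
  · exact (key v (by simp) (by simp)).1
  · exact (key v (by simp) (by simp)).2
  · exact (key _ (by simp) (by simp)).1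
  · exact (key _ (by simp) (by simp)).2
  · exact (key _ (by simp) (by simp)).1
  · exact (key _ (by simp) (by simp)).2

def rbCl (h r : ℝ) (p : ℂ) : Finset (ℤ × ℤ) :=
  Finset.Icc ⌈(p.re - r) / h⌉ ⌊(p.re + r) / h⌋ ×ˢ Finset.Icc ⌈(p.im - r) / h⌉ ⌊(p.im + r) / h⌋

theorem rb_mem_Cl (hh : 0 < h) {r : ℝ} {p : ℂ} {v : ℤ × ℤ} :
    v ∈ rbCl h r p ↔ |(rbZ h v - p).re| ≤ r ∧ |(rbZ h v - p).im| ≤ r := by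
  simp only [rbCl, Finset.mem_product, Finset.mem_Icc, Int.ceil_le, Int.le_floor, div_le_iff₀ hh,
    le_div_iff₀ hh, abs_le, rbZ, Complex.sub_re, Complex.sub_im]
  constructor
  · rintro ⟨⟨a, b⟩, c, d⟩; refine ⟨⟨?_, ?_⟩, ?_, ?_⟩ <;> linarith
  · rintro ⟨⟨a, b⟩, c, d⟩; refine ⟨⟨?_, ?_⟩, ?_, ?_⟩ <;> linarith

theorem rb_Cl_norm (hh : 0 < h) {r : ℝ} {p : ℂ} {v : ℤ × ℤ} (hv : v ∈ rbCl h r p) : ‖rbZ h v - p‖ ≤ 2 * r := by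
  rw [rb_mem_Cl hh] at hv
  have := rb_norm_le (rbZ h v - p); linarith [hv.1, hv.2]

theorem rb_nCl_norm (hh : 0 < h) {r : ℝ} {p : ℂ} {v : ℤ × ℤ} (hv : v ∉ rbCl h r p) : r ≤ ‖rbZ h v - p‖ := by
  by_contra hc
  push Not at hc
  exact hv ((rb_mem_Cl hh).2 ⟨(Complex.abs_re_le_norm _).trans hc.le, (Complex.abs_im_le_norm _).trans hc.le⟩)

theorem rb_Cl_ne (hh : 0 < h) {r : ℝ} (hr : h ≤ r) (x : ℝ) : ⌈(x - r) / h⌉ ≤ ⌊(x + r) / h⌋ := by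
  rw [Int.le_floor]
  have a := Int.ceil_lt_add_one ((x - r) / h)
  have : (x - r) / h + 1 ≤ (x + r) / h := by
    rw [div_add_one hh.ne', div_le_div_iff_of_pos_right hh]; linarith
  linarith

theorem rb_core_cl {R η r g1 g2 : ℝ} (hh : 0 < h) (he : 0 < e) {p : ℂ}
    (hR : 0 < R) (hpR : ‖p‖ + R < 1) (hr : 0 < r) (hrR : 16 * r ≤ R) (hhr : h ≤ r / 4)
    (hη : 0 < η) (hηR : 800 * η ≤ g1 * R) (he1 : 100 * e ≤ g1) (he2 : 100 * e ≤ g2)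
    (hg1 : ∀ z, R / 2 ≤ ‖z - p‖ → ‖z - p‖ ≤ R → g1 ≤ ‖rbG u z‖)
    (hg2 : ∀ z, r ≤ ‖z - p‖ → ‖z - p‖ ≤ R → g2 ≤ ‖rbG u z‖)
    (hu : ∀ z, ‖z - p‖ ≤ 4 * r → |u z - u p| < η / 2)
    (hest : ∀ v, ‖rbZ h v‖ ≤ 4 → ∀ k, |F (rbNb v k) - F v - fderiv ℝ u (rbZ h v) (rbZ h (rbNb v k) - rbZ h v)| ≤ e * h)
    (hFu : ∀ v, ‖rbZ h v‖ ≤ 4 → |F v - u (rbZ h v)| ≤ η / 2)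
    (hFne : ∀ v k, F (rbNb v k) ≠ F v) (B : Finset (ℤ × ℤ)) (hB : ∀ v, ‖rbZ h v‖ < 1 → v ∈ B) :
    ∑ v ∈ rbCl h r p, rbInd F v ≤ 1 := by
  have hnear : ∀ w : ℤ × ℤ, ‖rbZ h w - p‖ ≤ R → ‖rbZ h w‖ < 1 := by
    intro w hw
    have : rbZ h w = (rbZ h w - p) + p := by ring
    rw [this]; refine (norm_add_le _ _).trans_lt ?_; linarith
  have hnbd : ∀ v k, ‖rbZ h (rbNb v k) - p‖ ≤ ‖rbZ h v - p‖ + 2 * h := by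
    intro v k
    have a := rbZ_dist h hh.le v (rbNb v k) (rbNb_near v k).1 (rbNb_near v k).2
    have : rbZ h (rbNb v k) - p = (rbZ h (rbNb v k) - rbZ h v) + (rbZ h v - p) := by ring
    rw [this]; refine (norm_add_le _ _).trans ?_; linarith
  set χ : ℤ × ℤ → ℝ := fun w => max 0 (min 1 (6 - 8 * ‖rbZ h w - p‖ / R)) with hχ
  have hone : ∀ w, ‖rbZ h w - p‖ ≤ 5 * R / 8 → χ w = 1 := by
    intro w hw
    have : 8 * ‖rbZ h w - p‖ / R ≤ 5 := by rw [div_le_iff₀ hR]; linarith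
    simp only [hχ]; rw [min_eq_left (by linarith), max_eq_right (by norm_num)]
  have hpos : ∀ w, 0 < χ w → ‖rbZ h w - p‖ ≤ 3 * R / 4 := by
    intro w hw
    by_contra hc
    push Not at hc
    have : 6 ≤ 8 * ‖rbZ h w - p‖ / R := by rw [le_div_iff₀ hR]; linarith
    have : χ w = 0 := by
      simp only [hχ]; rw [max_eq_left]; exact (min_le_right _ _).trans (by linarith)
    linarith
  have hlip : ∀ v k, |χ (rbNb v k) - χ v| ≤ 16 * h / R := by
    intro v k
    refine (rb_clip _ _).trans ?_
    have a := rbZ_dist h hh.le v (rbNb v k) (rbNb_near v k).1 (rbNb_near v k).2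
    have b := abs_norm_sub_norm_le (rbZ h v - p) (rbZ h (rbNb v k) - p)
    rw [sub_sub_sub_cancel_right, norm_sub_rev (rbZ h v) (rbZ h (rbNb v k))] at b
    rw [show 6 - 8 * ‖rbZ h (rbNb v k) - p‖ / R - (6 - 8 * ‖rbZ h v - p‖ / R) =
      8 * (‖rbZ h v - p‖ - ‖rbZ h (rbNb v k) - p‖) / R by ring, abs_div, abs_of_pos hR, abs_mul,
      div_le_div_iff_of_pos_right hR, abs_of_pos (by norm_num : (0:ℝ) < 8)]
    linarith
  refine rb_cluster F χ (u p) η hη (fun w => le_max_left _ _) B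
    (fun w hw => hB w (hnear w ((hpos w hw).trans (by linarith)))) (rbCl h r p) ?_ ?_
    (fun v _ k => hFne v k) ?_ ?_ (⌈(p.re - r) / h⌉, ⌈(p.im - r) / h⌉) ?_ ?_
  · intro v hv; apply hone; have := rb_Cl_norm hh hv; linarith
  · intro v hv k; apply hone; have := rb_Cl_norm hh hv; have := hnbd v k; linarith
  · intro v hv
    have h1 := rb_Cl_norm hh hv
    have h2 := hu (rbZ h v) (by linarith)
    have h3 := hFu v ((hnear v (by linarith)).le.trans (by norm_num))
    have := abs_add_le (F v - u (rbZ h v)) (u (rbZ h v) - u p)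
    rw [sub_add_sub_cancel] at this; linarith
  · intro v hvC hv τ hτ h0
    have hv1 := hpos v hv
    have hz := hnear v (by linarith)
    have hes := hest v (hz.le.trans (by norm_num))
    simp only [rb_nb_lin] at hes
    have main : ∀ D, 0 ≤ D → 4 * D < ‖rbG u (rbZ h v)‖ →
        (∀ k, |τ * (χ (rbNb v k) - χ v)| ≤ (D - e) * h) →
        ∃ k, 0 < F (rbNb v k) - u p - τ * χ (rbNb v k) ∧ 0 < F (rbNb v (k+1)) - u p - τ * χ (rbNb v (k+1)) ∧
        F (rbNb v (k+3)) - u p - τ * χ (rbNb v (k+3)) < 0 ∧ F (rbNb v (k+4)) - u p - τ * χ (rbNb v (k+4)) < 0 := by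
      intro D hD hDg hD2
      have hn := rb_norm_le (rbG u (rbZ h v))
      obtain ⟨k, k0, k1, k3, k4⟩ := rb_sector (h * (rbG u (rbZ h v)).re) (h * (rbG u (rbZ h v)).im) (D * h) (by positivity)
        (by rw [abs_mul, abs_mul, abs_of_pos hh]; nlinarith)
        (fun k => h * ((rbDir k).1 * (rbG u (rbZ h v)).re + (rbDir k).2 * (rbG u (rbZ h v)).im))
        (by simp [rbDir]) (by simp [rbDir]; ring) (by simp [rbDir]) (by simp [rbDir]) (by simp [rbDir]; ring)
        (by simp [rbDir])
      have hb : ∀ k, |F (rbNb v k) - u p - τ * χ (rbNb v k) -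
          h * ((rbDir k).1 * (rbG u (rbZ h v)).re + (rbDir k).2 * (rbG u (rbZ h v)).im)| ≤ D * h := by
        intro k
        have a := abs_le.1 (hes k); have b := abs_le.1 (hD2 k)
        rw [abs_le]; constructor <;> linarith
      have hb0 := abs_le.1 (hb k)
      have hb1 := abs_le.1 (hb (k+1))
      have hb3 := abs_le.1 (hb (k+3))
      have hb4 := abs_le.1 (hb (k+4))
      refine ⟨k, ?_, ?_, ?_, ?_⟩ <;> linarith
    rcases lt_or_ge ‖rbZ h v - p‖ (R / 2) with hc | hc
    · apply main e he.le
      · have := hg2 _ (rb_nCl_norm hh hvC) (by linarith); linarith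
      · intro k
        rw [hone v (by linarith), hone (rbNb v k) (by have := hnbd v k; linarith)]; simp
    · have hgg := hg1 _ hc (by linarith)
      have hgpos : 0 < g1 := by linarith
      apply main (e + g1 / 50) (by positivity)
      · linarith
      · intro k
        rw [abs_mul]
        have h1 : |τ| * |χ (rbNb v k) - χ v| ≤ η * (16 * h / R) :=
          mul_le_mul hτ.le (hlip v k) (abs_nonneg _) hη.le
        refine h1.trans ?_
        rw [mul_div_assoc', div_le_iff₀ hR]
        nlinarith
  · simp only [rbCl, Finset.mem_product, Finset.mem_Icc, le_refl, true_and]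
    exact ⟨rb_Cl_ne hh (by linarith) _, rb_Cl_ne hh (by linarith) _⟩
  · intro P h0 hs v hv
    exact rb_box_conn _ _ _ _ (rb_Cl_ne hh (by linarith) _) (rb_Cl_ne hh (by linarith) _) P h0 hs v hv

theorem rb_core {R η r g1 g2 : ℝ} {m : ℕ} (hm : h * m = 2) (hh : 0 < h) (he : 0 < e) (S : Finset ℂ)
    (hR : 0 < R) (hpR : ∀ p ∈ S, ‖p‖ + R < 1) (hSd : ∀ p ∈ S, ∀ q ∈ S, p ≠ q → 2 * R ≤ ‖p - q‖)
    (hr : 0 < r) (hrR : 16 * r ≤ R) (hhr : h ≤ r / 4) (hh4 : h ≤ 1 / 4)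
    (hη : 0 < η) (hηR : 800 * η ≤ g1 * R) (he1 : 100 * e ≤ g1) (he2 : 100 * e ≤ g2)
    (hg1 : ∀ p ∈ S, ∀ z, R / 2 ≤ ‖z - p‖ → ‖z - p‖ ≤ R → g1 ≤ ‖rbG u z‖)
    (hg2 : ∀ z, ‖z‖ ≤ 4 → (∀ p ∈ S, r ≤ ‖z - p‖) → g2 ≤ ‖rbV u z‖)
    (hu : ∀ p ∈ S, ∀ z, ‖z - p‖ ≤ 4 * r → |u z - u p| < η / 2)
    (hest : ∀ v, ‖rbZ h v‖ ≤ 4 → ∀ k, |F (rbNb v k) - F v - fderiv ℝ u (rbZ h v) (rbZ h (rbNb v k) - rbZ h v)| ≤ e * h)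
    (hVc : ∀ z w : ℂ, ‖z‖ ≤ 4 → ‖w‖ ≤ 4 → ‖z - w‖ ≤ 4 * h → ‖rbV u z - rbV u w‖ ≤ e)
    (hFu : ∀ v, ‖rbZ h v‖ ≤ 4 → |F v - u (rbZ h v)| ≤ η / 2)
    (hFne : ∀ v k, F (rbNb v k) ≠ F v) :
    ∃ n : ℂ → ℤ, (∀ p ∈ S, n p ≤ 1) ∧
      ∑ v ∈ Finset.Ioc (-m : ℤ) m ×ˢ Finset.Ioc (-m : ℤ) m, rbTurn (rbAL u F h) (rbAU u F h) v =
      2 * Real.pi * ((∑ p ∈ S, n p : ℤ) : ℝ) := by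
  classical
  have hB : ∀ v, ‖rbZ h v‖ < 1 → v ∈ Finset.Ioc (-m : ℤ) m ×ˢ Finset.Ioc (-m : ℤ) m := by
    intro v hv
    have a := abs_le.1 ((Complex.abs_re_le_norm (rbZ h v)).trans hv.le)
    have b := abs_le.1 ((Complex.abs_im_le_norm (rbZ h v)).trans hv.le)
    simp only [rbZ] at a b
    have l1 : ∀ x : ℤ, h * x ≤ 1 → x ≤ m := by
      intro x hx
      by_contra hc; push Not at hc
      have : (m : ℝ) < x := by exact_mod_cast hc
      nlinarith
    have l2 : ∀ x : ℤ, -1 ≤ h * x → -(m:ℤ) < x := by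
      intro x hx
      by_contra hc; push Not at hc
      have : (x : ℝ) ≤ -(m : ℝ) := by exact_mod_cast hc
      nlinarith
    simp only [Finset.mem_product, Finset.mem_Ioc]
    exact ⟨⟨l2 _ a.1, l1 _ a.2⟩, l2 _ b.1, l1 _ b.2⟩
  refine ⟨fun p => ∑ v ∈ rbCl h r p, rbInd F v, ?_, ?_⟩
  · intro p hp
    refine rb_core_cl hh he hR (hpR p hp) hr hrR hhr hη hηR he1 he2 (hg1 p hp) ?_ (hu p hp) hest hFu hFne _ hB
    intro z hz1 hz2
    have hz : ‖z‖ < 1 := by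
      have : z = (z - p) + p := by ring
      rw [this]; refine (norm_add_le _ _).trans_lt ?_; linarith [hpR p hp]
    rw [← rbV_eq u hz.le]
    refine hg2 z (by linarith) ?_
    intro q hq
    by_cases hqp : q = p
    · rw [hqp]; exact hz1
    · have := hSd q hq p hp hqp
      have h3 := norm_sub_le_norm_sub_add_norm_sub q z p
      rw [norm_sub_rev q z] at h3; linarith
  · have hin : ∀ p ∈ S, ∀ v ∈ rbCl h r p, ∀ w : ℤ × ℤ, |w.1 - v.1| ≤ 1 → |w.2 - v.2| ≤ 1 → ‖rbZ h w‖ < 1 := by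
      intro p hp v hv w h1 h2
      have a := rbZ_dist h hh.le v w h1 h2
      have b := rb_Cl_norm hh hv
      have : rbZ h w = (rbZ h w - rbZ h v) + (rbZ h v - p) + p := by ring
      rw [this]
      have c := norm_add₃_le (a := rbZ h w - rbZ h v) (b := rbZ h v - p) (c := p)
      have := hpR p hp
      linarith
    rw [← Finset.sum_subset (s₁ := S.biUnion (rbCl h r))]
    · rw [Finset.sum_biUnion]
      · push_cast
        rw [Finset.mul_sum]
        refine Finset.sum_congr rfl fun p hp => ?_
        rw [Finset.mul_sum]
        refine Finset.sum_congr rfl fun v hv => ?_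
        rw [← rb_turn_ind F hh v (hFne v)]
        have hi := hin p hp v hv
        unfold rbTurn rbAL rbAU
        rw [if_pos (hi v (by simp) (by simp)), if_pos (hi v (by simp) (by simp)),
          if_pos (hi _ (by simp) (by simp)), if_pos (hi _ (by simp) (by simp)),
          if_pos (hi _ (by simp) (by simp)), if_pos (hi _ (by simp) (by simp))]
      · intro p hp q hq hpq
        rw [Function.onFun, Finset.disjoint_left]
        intro v hv hv'
        have a := rb_Cl_norm hh hv
        have b := rb_Cl_norm hh hv'
        have := hSd p hp q hq hpq
        have h3 := norm_sub_le_norm_sub_add_norm_sub p (rbZ h v) q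
        rw [norm_sub_rev p (rbZ h v)] at h3; linarith
    · intro v hv
      obtain ⟨p, hp, hv⟩ := Finset.mem_biUnion.1 hv
      exact hB v (hin p hp v hv v (by simp) (by simp))
    · intro v hvb hv
      have hv3 : ‖rbZ h v‖ ≤ 3 := by
        simp only [Finset.mem_product, Finset.mem_Ioc] at hvb
        rw [← abs_of_nonneg (norm_nonneg (rbZ h v)), ← abs_of_nonneg (by norm_num : (0:ℝ) ≤ 3),
          ← sq_le_sq, Complex.sq_norm, Complex.normSq_apply]
        simp only [rbZ]
        have l : ∀ x : ℤ, -(m:ℤ) < x → x ≤ m → (h * x) * (h * x) ≤ 4 := by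
          intro x h1 h2
          have h1' : -(m:ℝ) ≤ x := by exact_mod_cast h1.le
          have h2' : (x:ℝ) ≤ m := by exact_mod_cast h2
          have a : -2 ≤ h * x := by nlinarith
          have b : h * x ≤ 2 := by nlinarith
          nlinarith
        have := l _ hvb.1.1 hvb.1.2
        have := l _ hvb.2.1 hvb.2.2
        linarith
      refine rb_turn_noncl hh hh4 he.le hest hVc hv3 ?_
      have := hg2 (rbZ h v) (by linarith) (fun p hp => rb_nCl_norm hh fun hc => hv (Finset.mem_biUnion.2 ⟨p, hp, hc⟩))
      linarith
end core

theorem rb_arg_lift {c d : ℂ} {s t : ℝ} (hc : c ≠ 0) (hd : d ≠ 0)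
    (hc' : c = ‖c‖ * Complex.exp (s * Complex.I)) (hd' : d = ‖d‖ * Complex.exp (t * Complex.I))
    (h : |s - t| < Real.pi) : (c / d).arg = s - t := by
  have e : c / d = ((‖c‖ / ‖d‖ : ℝ) : ℂ) * (Complex.cos ((s - t : ℝ) : ℂ) + Complex.sin ((s - t : ℝ) : ℂ) * Complex.I) := by
    rw [← Complex.exp_mul_I]
    conv_lhs => rw [hc', hd']
    push_cast
    rw [sub_mul, Complex.exp_sub, mul_div_mul_comm]
  rw [e, Complex.arg_mul_cos_add_sin_mul_I (div_pos (norm_pos_iff.2 hc) (norm_pos_iff.2 hd))]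
  have := abs_lt.1 h
  exact ⟨this.1, this.2.le⟩

theorem rbV_polar (u : ℂ → ℝ) {ρ t : ℝ} (hρ : 1 ≤ ρ) :
    rbV u (ρ * Complex.exp (t * Complex.I)) = rbG u (Complex.exp (t * Complex.I)) := by
  have hn : ‖(ρ : ℂ) * Complex.exp (t * Complex.I)‖ = ρ := by
    rw [norm_mul, Complex.norm_exp_ofReal_mul_I, mul_one, Complex.norm_real, Real.norm_of_nonneg (by linarith)]
  unfold rbV
  rw [hn, max_eq_right hρ, Complex.real_smul, ← mul_assoc]
  push_cast
  rw [inv_mul_cancel₀ (by exact_mod_cast (by linarith : ρ ≠ 0)), one_mul]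

theorem rb_polar (y : ℝ) : ∃ ρ : ℝ, 1 ≤ ρ ∧ (⟨2, 2 * y⟩ : ℂ) = ρ * Complex.exp (Real.arctan y * Complex.I) := by
  have h0 : 1 ≤ √(1 + y ^ 2) := by
    rw [Real.one_le_sqrt]; nlinarith [sq_nonneg y]
  have h1 : √(1 + y ^ 2) ≠ 0 := by linarith
  refine ⟨2 * √(1 + y ^ 2), by linarith, ?_⟩
  rw [Complex.exp_mul_I, ← Complex.ofReal_cos, ← Complex.ofReal_sin, Real.cos_arctan, Real.sin_arctan]
  apply Complex.ext
  · simp [-Complex.ofReal_mul]; field_simp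
  · simp [-Complex.ofReal_mul]; field_simp

theorem rb_polar_rot {z w : ℂ} {t c : ℝ} (hw : z = Complex.exp (c * Complex.I) * w)
    (h : ∃ ρ : ℝ, 1 ≤ ρ ∧ w = ρ * Complex.exp (t * Complex.I)) :
    ∃ ρ : ℝ, 1 ≤ ρ ∧ z = ρ * Complex.exp ((c + t : ℝ) * Complex.I) := by
  obtain ⟨ρ, h1, h2⟩ := h
  refine ⟨ρ, h1, ?_⟩
  rw [hw, h2]; push_cast; rw [add_mul, Complex.exp_add]; ring

theorem rb_bdry {u : ℂ → ℝ} {F : ℤ × ℤ → ℝ} {h : ℝ} {m : ℕ} (hm : h * m = 2) {α : ℝ → ℝ}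
    (hα : ∀ t : ℝ, rbG u (Complex.exp (t * Complex.I)) = ‖rbG u (Complex.exp (t * Complex.I))‖ * Complex.exp (α t * Complex.I))
    (hne : ∀ t : ℝ, rbG u (Complex.exp (t * Complex.I)) ≠ 0)
    (hfine : ∀ x ∈ Set.Icc (-1 : ℝ) 1, ∀ y ∈ Set.Icc (-1 : ℝ) 1, |x - y| ≤ 1 / m →
      |α (0 + Real.arctan x) - α (0 + Real.arctan y)| < Real.pi ∧
      |α (Real.pi / 2 + Real.arctan x) - α (Real.pi / 2 + Real.arctan y)| < Real.pi ∧
      |α (Real.pi + Real.arctan x) - α (Real.pi + Real.arctan y)| < Real.pi ∧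
      |α (3 * Real.pi / 2 + Real.arctan x) - α (3 * Real.pi / 2 + Real.arctan y)| < Real.pi) :
    ∑ v ∈ Finset.Ioc (-m : ℤ) m ×ˢ Finset.Ioc (-m : ℤ) m, rbTurn (rbAL u F h) (rbAU u F h) v =
      α (7 * Real.pi / 4) - α (-(Real.pi / 4)) := by
  have hm0 : (m : ℝ) ≠ 0 := by intro h0; rw [h0] at hm; simp at hm
  have hmp : 0 < (m : ℝ) := lt_of_le_of_ne (Nat.cast_nonneg m) hm0.symm
  have hhe : h = 2 / m := by field_simp; exact hm
  have side : ∀ (w : ℤ × ℤ) (t : ℝ), (∃ ρ : ℝ, 1 ≤ ρ ∧ rbZ h w = ρ * Complex.exp (t * Complex.I)) →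
      rbAL u F h w = rbG u (Complex.exp (t * Complex.I)) ∧ rbAU u F h w = rbG u (Complex.exp (t * Complex.I)) := by
    rintro w t ⟨ρ, hρ, hw⟩
    have hn : ¬ ‖rbZ h w‖ < 1 := by
      rw [hw, norm_mul, Complex.norm_exp_ofReal_mul_I, mul_one, Complex.norm_real, Real.norm_of_nonneg (by linarith)]
      linarith
    unfold rbAL rbAU
    rw [if_neg hn, if_neg hn, hw, rbV_polar u hρ]; exact ⟨rfl, rfl⟩
  have step : ∀ (w w' : ℤ × ℤ) (t t' : ℝ), (∃ ρ : ℝ, 1 ≤ ρ ∧ rbZ h w = ρ * Complex.exp (t * Complex.I)) →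
      (∃ ρ : ℝ, 1 ≤ ρ ∧ rbZ h w' = ρ * Complex.exp (t' * Complex.I)) → |α t' - α t| < Real.pi →
      (rbAL u F h w' / rbAU u F h w).arg + (rbAU u F h w' / rbAL u F h w').arg = α t' - α t := by
    intro w w' t t' h1 h2 h3
    rw [(side w t h1).2, (side w' t' h2).1, (side w' t' h2).2, div_self (hne _), Complex.arg_one, add_zero]
    exact rb_arg_lift (hne _) (hne _) (hα _) (hα _) h3
  have pR : ∀ j : ℤ, ∃ ρ : ℝ, 1 ≤ ρ ∧ rbZ h (m, j) = ρ * Complex.exp ((0 + Real.arctan (j / m) : ℝ) * Complex.I) := by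
    intro j
    refine rb_polar_rot ?_ (rb_polar (j / m))
    apply Complex.ext
    · simp [rbZ, hm]
    · simp [rbZ, hhe]; ring
  have pT : ∀ i : ℤ, ∃ ρ : ℝ, 1 ≤ ρ ∧ rbZ h (i, m) = ρ * Complex.exp ((Real.pi / 2 + Real.arctan (-i / m) : ℝ) * Complex.I) := by
    intro i
    refine rb_polar_rot ?_ (rb_polar (-i / m))
    rw [show ((Real.pi / 2 : ℝ) : ℂ) * Complex.I = Real.pi / 2 * Complex.I by push_cast; ring, Complex.exp_pi_div_two_mul_I]
    apply Complex.ext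
    · simp [rbZ, hhe]; ring
    · simp [rbZ, hm]
  have pL : ∀ j : ℤ, ∃ ρ : ℝ, 1 ≤ ρ ∧ rbZ h (-m, j) = ρ * Complex.exp ((Real.pi + Real.arctan (-j / m) : ℝ) * Complex.I) := by
    intro i
    refine rb_polar_rot ?_ (rb_polar (-i / m))
    rw [Complex.exp_pi_mul_I]
    apply Complex.ext
    · simp [rbZ, hm]
    · simp [rbZ, hhe]; ring
  have pB : ∀ j : ℤ, ∃ ρ : ℝ, 1 ≤ ρ ∧ rbZ h (j, -m) = ρ * Complex.exp ((3 * Real.pi / 2 + Real.arctan (j / m) : ℝ) * Complex.I) := by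
    intro i
    refine rb_polar_rot ?_ (rb_polar (i / m))
    rw [show ((3 * Real.pi / 2 : ℝ) : ℂ) * Complex.I = Real.pi * Complex.I + Real.pi / 2 * Complex.I by push_cast; ring,
      Complex.exp_add, Complex.exp_pi_mul_I, Complex.exp_pi_div_two_mul_I]
    apply Complex.ext
    · simp [rbZ, hhe]; ring
    · simp [rbZ, hm]
  have hx : ∀ j : ℤ, -(m:ℤ) ≤ j → j ≤ m → (j / m : ℝ) ∈ Set.Icc (-1 : ℝ) 1 ∧ (-j / m : ℝ) ∈ Set.Icc (-1 : ℝ) 1 := by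
    intro j h1 h2
    have h1' : -(m:ℝ) ≤ j := by exact_mod_cast h1
    have h2' : (j:ℝ) ≤ m := by exact_mod_cast h2
    simp only [Set.mem_Icc, le_div_iff₀ hmp, div_le_iff₀ hmp]
    refine ⟨⟨?_, ?_⟩, ?_, ?_⟩ <;> linarith
  have hd1 : ∀ j : ℤ, |(j / m : ℝ) - ((j - 1 : ℤ) : ℝ) / m| ≤ 1 / m := by
    intro j; push_cast; rw [show (j / m : ℝ) - (j - 1) / m = 1 / m by ring, abs_of_pos (by positivity)]
  have hd2 : ∀ j : ℤ, |(-j / m : ℝ) - (-((j - 1 : ℤ) : ℝ)) / m| ≤ 1 / m := by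
    intro j; push_cast; rw [show (-j / m : ℝ) - (-(j - 1)) / m = -(1 / m) by ring, abs_neg, abs_of_pos (by positivity)]
  rw [rb_box_sum]
  have s1 : ∀ j ∈ Finset.Ioc (-m : ℤ) m,
        (((rbAL u F h (m, j) / rbAU u F h (m, j - 1)).arg + (rbAU u F h (m, j) / rbAL u F h (m, j)).arg) -
         ((rbAL u F h (-m, j) / rbAU u F h (-m, j - 1)).arg + (rbAU u F h (-m, j) / rbAL u F h (-m, j)).arg)) =
      ((fun j : ℤ => α (0 + Real.arctan (j / m)) - α (Real.pi + Real.arctan (-j / m))) j -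
       (fun j : ℤ => α (0 + Real.arctan (j / m)) - α (Real.pi + Real.arctan (-j / m))) (j - 1)) := by
    intro j hj
    rw [Finset.mem_Ioc] at hj
    have x1 := hx j (by omega) (by omega)
    have x2 := hx (j - 1) (by omega) (by omega)
    rw [step _ _ _ _ (pR (j - 1)) (pR j) (hfine _ x1.1 _ x2.1 (hd1 j)).1,
      step _ _ _ _ (pL (j - 1)) (pL j) (hfine _ x1.2 _ x2.2 (hd2 j)).2.2.1]
    ring
  have s2 : ∀ i ∈ Finset.Ioc (-m : ℤ) m,
        (((rbAL u F h (i - 1, m) / rbAU u F h (i, m)).arg + (rbAU u F h (i - 1, m) / rbAL u F h (i - 1, m)).arg) -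
         ((rbAL u F h (i - 1, -m) / rbAU u F h (i, -m)).arg + (rbAU u F h (i - 1, -m) / rbAL u F h (i - 1, -m)).arg)) =
      ((fun j : ℤ => α (3 * Real.pi / 2 + Real.arctan (j / m)) - α (Real.pi / 2 + Real.arctan (-j / m))) i -
       (fun j : ℤ => α (3 * Real.pi / 2 + Real.arctan (j / m)) - α (Real.pi / 2 + Real.arctan (-j / m))) (i - 1)) := by
    intro j hj
    rw [Finset.mem_Ioc] at hj
    have x1 := hx j (by omega) (by omega)
    have x2 := hx (j - 1) (by omega) (by omega)
    rw [step _ _ _ _ (pT j) (pT (j - 1)) (by rw [abs_sub_comm]; exact (hfine _ x1.2 _ x2.2 (hd2 j)).2.1),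
      step _ _ _ _ (pB j) (pB (j - 1)) (by rw [abs_sub_comm]; exact (hfine _ x1.1 _ x2.1 (hd1 j)).2.2.2)]
    ring
  rw [Finset.sum_congr rfl s1, Finset.sum_congr rfl s2, rb_tele2, rb_tele2]
  push_cast
  rw [neg_neg, neg_div, div_self hm0, Real.arctan_neg, Real.arctan_one,
    show 3 * Real.pi / 2 + Real.pi / 4 = 7 * Real.pi / 4 by ring,
    show 3 * Real.pi / 2 + -(Real.pi / 4) = Real.pi + Real.pi / 4 by ring,
    show Real.pi / 2 + Real.pi / 4 = Real.pi + -(Real.pi / 4) by ring,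
    show Real.pi / 2 + -(Real.pi / 4) = 0 + Real.pi / 4 by ring, zero_add, zero_add]
  ring

theorem rbG_cont {u : ℂ → ℝ} (hu : ContDiff ℝ 1 u) : Continuous (rbG u) := by
  have h := hu.continuous_fderiv one_ne_zero
  have e : rbG u = fun z => (fderiv ℝ u z 1 : ℂ) + (fderiv ℝ u z Complex.I : ℂ) * Complex.I := by
    funext z; apply Complex.ext <;> simp [rbG]
  rw [e]
  have h1 : Continuous fun z => fderiv ℝ u z 1 := h.clm_apply continuous_const
  have h2 : Continuous fun z => fderiv ℝ u z Complex.I := h.clm_apply continuous_const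
  exact (Complex.continuous_ofReal.comp h1).add ((Complex.continuous_ofReal.comp h2).mul continuous_const)

theorem rbV_cont {u : ℂ → ℝ} (hu : ContDiff ℝ 1 u) : Continuous (rbV u) := by
  unfold rbV
  refine (rbG_cont hu).comp ?_
  refine Continuous.smul (Continuous.inv₀ (continuous_const.max continuous_norm) ?_) continuous_id
  intro z; have := le_max_left 1 ‖z‖; linarith

theorem rb_taylor {u : ℂ → ℝ} (hu : ContDiff ℝ 1 u) {ε : ℝ} (hε : 0 < ε) :
    ∃ δ > 0, ∀ z w : ℂ, ‖z‖ ≤ 5 → ‖w‖ ≤ 5 → ‖w - z‖ < δ →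
      |u w - u z - fderiv ℝ u z (w - z)| ≤ ε * ‖w - z‖ := by
  have h := hu.continuous_fderiv one_ne_zero
  have hc := (isCompact_closedBall (0 : ℂ) 5).uniformContinuousOn_of_continuous h.continuousOn
  obtain ⟨δ, hδ, hd⟩ := Metric.uniformContinuousOn_iff.1 hc ε hε
  refine ⟨δ, hδ, fun z w hz hw hzw => ?_⟩
  have hz' : z ∈ Metric.closedBall (0 : ℂ) 5 := by simpa using hz
  have hw' : w ∈ Metric.closedBall (0 : ℂ) 5 := by simpa using hw
  have key := Convex.norm_image_sub_le_of_norm_hasFDerivWithin_le' (f := u) (f' := fderiv ℝ u) (φ := fderiv ℝ u z)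
    (s := Metric.closedBall (0 : ℂ) 5 ∩ Metric.ball z δ) (C := ε) (x := z) (y := w)
    (fun x _ => ((hu.differentiable one_ne_zero) x).hasFDerivAt.hasFDerivWithinAt)
    (fun x hx => by
      rw [← dist_eq_norm]; exact (hd x hx.1 z hz' (by simpa using hx.2)).le)
    ((convex_closedBall _ _).inter (convex_ball _ _)) ⟨hz', Metric.mem_ball_self hδ⟩
    ⟨hw', by rw [Metric.mem_ball, dist_eq_norm]; exact hzw⟩
  simpa using key

theorem rb_lower {u : ℂ → ℝ} (hu : ContDiff ℝ 1 u) {S : Finset ℂ} (hS1 : ∀ p ∈ S, ‖p‖ < 1)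
    (hS2 : ∀ z, ‖z‖ ≤ 1 → rbG u z = 0 → z ∈ S) {ρ : ℝ} (hρ : 0 < ρ) :
    ∃ g > 0, ∀ z : ℂ, ‖z‖ ≤ 4 → (∀ p ∈ S, ρ ≤ ‖z - p‖) → g ≤ ‖rbV u z‖ := by
  have hcl : IsClosed {z : ℂ | ∀ p ∈ S, ρ ≤ ‖z - p‖} := by
    have : {z : ℂ | ∀ p ∈ S, ρ ≤ ‖z - p‖} = ⋂ p ∈ S, {z : ℂ | ρ ≤ ‖z - p‖} := by ext; simp
    rw [this]
    exact isClosed_biInter fun p _ => isClosed_le continuous_const (continuous_id.sub continuous_const).norm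
  have hK := (isCompact_closedBall (0 : ℂ) 4).inter_right hcl
  obtain ⟨g, hg, h⟩ := hK.exists_forall_le' ((rbV_cont hu).norm.continuousOn) (a := 0) (by
    rintro z ⟨hz, hzS⟩
    rw [norm_pos_iff]
    intro h0
    rcases le_or_gt ‖z‖ 1 with h1 | h1
    · rw [rbV_eq u h1] at h0
      have := hzS z (hS2 z h1 h0)
      simp at this; linarith
    · have hn : ‖((max 1 ‖z‖)⁻¹ : ℝ) • z‖ = 1 := by
        rw [max_eq_right h1.le, norm_smul, norm_inv, norm_norm, inv_mul_cancel₀ (by linarith)]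
      have := hS1 _ (hS2 _ hn.le h0)
      linarith)
  exact ⟨g, hg, fun z hz hzS => h z ⟨by simpa using hz, hzS⟩⟩

theorem rb_pert (f : ℤ × ℤ → ℝ) {ε : ℝ} (hε : 0 < ε) :
    ∃ t, 0 < t ∧ t < ε ∧ ∀ v k, f (rbNb v k) + t * ((rbNb v k).1 + (rbNb v k).2) ≠ f v + t * (v.1 + v.2) := by
  have hc : (Set.range fun x : (ℤ × ℤ) × Fin 6 =>
      -(f (rbNb x.1 x.2) - f x.1) / (((rbDir x.2).1 : ℝ) + (rbDir x.2).2)).Countable := Set.countable_range _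
  obtain ⟨t, ht, h1, h2⟩ := (hc.dense_compl ℝ).exists_between hε
  refine ⟨t, h1, h2, fun v k he => ht ⟨(v, k), ?_⟩⟩
  have hd : (((rbDir k).1 : ℝ) + (rbDir k).2) ≠ 0 := by
    have : ∀ k, (rbDir k).1 + (rbDir k).2 ≠ 0 := by decide
    exact_mod_cast this k
  simp only
  rw [div_eq_iff hd]
  simp only [rbNb, Prod.fst_add, Prod.snd_add] at he ⊢
  push_cast at he
  linarith

theorem rb_key {u : ℂ → ℝ} (hu : ContDiff ℝ 1 u) (S : Finset ℂ) (hS1 : ∀ p ∈ S, ‖p‖ < 1)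
    (hS2 : ∀ z, ‖z‖ ≤ 1 → rbG u z = 0 → z ∈ S) {α : ℝ → ℝ} (hαc : Continuous α)
    (hα : ∀ t : ℝ, rbG u (Complex.exp (t * Complex.I)) = ‖rbG u (Complex.exp (t * Complex.I))‖ * Complex.exp (α t * Complex.I)) :
    ∃ n : ℂ → ℤ, (∀ p ∈ S, n p ≤ 1) ∧
      α (7 * Real.pi / 4) - α (-(Real.pi / 4)) = 2 * Real.pi * ((∑ p ∈ S, n p : ℤ) : ℝ) := by
  have hne : ∀ t : ℝ, rbG u (Complex.exp (t * Complex.I)) ≠ 0 := by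
    intro t h0
    have hn := Complex.norm_exp_ofReal_mul_I t
    have := hS1 _ (hS2 _ hn.le h0); linarith
  -- R
  have evlt : ∀ c : ℝ, 0 < c → ∀ᶠ x in nhdsWithin (0:ℝ) (Set.Ioi 0), x < c := fun c hc =>
    mem_nhdsWithin_of_mem_nhds (Iio_mem_nhds hc)
  have evpos : ∀ᶠ x in nhdsWithin (0:ℝ) (Set.Ioi 0), 0 < x := self_mem_nhdsWithin
  obtain ⟨R, hR, hpR, hSd⟩ : ∃ R : ℝ, 0 < R ∧ (∀ p ∈ S, ‖p‖ + R < 1) ∧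
      (∀ p ∈ S, ∀ q ∈ S, p ≠ q → 2 * R ≤ ‖p - q‖) := by
    have h1 : ∀ᶠ R in nhdsWithin (0:ℝ) (Set.Ioi 0), ∀ p ∈ S, ‖p‖ + R < 1 := by
      rw [Finset.eventually_all]; intro p hp
      filter_upwards [evlt (1 - ‖p‖) (by linarith [hS1 p hp])] with x hx
      linarith
    have h2 : ∀ᶠ R in nhdsWithin (0:ℝ) (Set.Ioi 0), ∀ p ∈ S, ∀ q ∈ S, p ≠ q → 2 * R ≤ ‖p - q‖ := by
      rw [Finset.eventually_all]; intro p hp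
      rw [Finset.eventually_all]; intro q hq
      by_cases hpq : p = q
      · exact Filter.Eventually.of_forall fun x h => absurd hpq h
      · filter_upwards [evlt (‖p - q‖ / 2) (by have := norm_pos_iff.2 (sub_ne_zero.2 hpq); linarith)] with x hx _
        linarith
    obtain ⟨R, a, b, c⟩ := (evpos.and (h1.and h2)).exists
    exact ⟨R, a, b, c⟩
  obtain ⟨g1, hg1p, hg1⟩ := rb_lower hu hS1 hS2 (half_pos hR)
  set η := g1 * R / 800 with hηdef
  have hη : 0 < η := by positivity
  obtain ⟨r, hr, hrR, hur⟩ : ∃ r : ℝ, 0 < r ∧ 16 * r ≤ R ∧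
      ∀ p ∈ S, ∀ z, ‖z - p‖ ≤ 4 * r → |u z - u p| < η / 2 := by
    have h1 : ∀ᶠ r in nhdsWithin (0:ℝ) (Set.Ioi 0), ∀ p ∈ S, ∀ z, ‖z - p‖ ≤ 4 * r → |u z - u p| < η / 2 := by
      rw [Finset.eventually_all]; intro p hp
      obtain ⟨δ, hδ, hd⟩ := Metric.continuousAt_iff.1 (hu.continuous.continuousAt (x := p)) (η / 2) (half_pos hη)
      filter_upwards [evlt (δ / 4) (by linarith)] with x hx z hz
      have := hd (x := z) (by rw [dist_eq_norm]; linarith)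
      rwa [Real.dist_eq] at this
    obtain ⟨r, a, b, c⟩ := (evpos.and ((evlt (R / 16) (by linarith)).and h1)).exists
    exact ⟨r, a, by linarith, c⟩
  obtain ⟨g2, hg2p, hg2⟩ := rb_lower hu hS1 hS2 hr
  set e := min g1 g2 / 100 with hedef
  have he : 0 < e := by have := lt_min hg1p hg2p; positivity
  have he1 : 100 * e ≤ g1 := by have := min_le_left g1 g2; linarith
  have he2 : 100 * e ≤ g2 := by have := min_le_right g1 g2; linarith
  obtain ⟨δ2, hδ2, htay⟩ := rb_taylor hu (ε := e / 4) (by linarith)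
  obtain ⟨δ1, hδ1, hV⟩ := Metric.uniformContinuousOn_iff.1
    ((isCompact_closedBall (0 : ℂ) 4).uniformContinuousOn_of_continuous (rbV_cont hu).continuousOn) e he
  have hfc : ∀ c : ℝ, ∃ δ > 0, ∀ x ∈ Set.Icc (-1 : ℝ) 1, ∀ y ∈ Set.Icc (-1 : ℝ) 1, |x - y| < δ →
      |α (c + Real.arctan x) - α (c + Real.arctan y)| < Real.pi := by
    intro c
    have hcont : Continuous fun x => α (c + Real.arctan x) :=
      hαc.comp (continuous_const.add Real.continuous_arctan)
    exact Metric.uniformContinuousOn_iff.1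
      (isCompact_Icc.uniformContinuousOn_of_continuous hcont.continuousOn) Real.pi Real.pi_pos
  obtain ⟨d0, hd0, f0⟩ := hfc 0
  obtain ⟨d1, hd1, f1⟩ := hfc (Real.pi / 2)
  obtain ⟨d2, hd2, f2⟩ := hfc Real.pi
  obtain ⟨d3, hd3, f3⟩ := hfc (3 * Real.pi / 2)
  obtain ⟨m, hm1, hm2⟩ : ∃ m : ℕ, 0 < m ∧ ((1 : ℝ) / m < r / 8 ∧ (1 : ℝ) / m < 1 / 8 ∧ (1 : ℝ) / m < δ2 / 4 ∧ (1 : ℝ) / m < δ1 / 8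
      ∧ (1 : ℝ) / m < d0 ∧ (1 : ℝ) / m < d1 ∧ (1 : ℝ) / m < d2 ∧ (1 : ℝ) / m < d3) := by
    have ev : ∀ c : ℝ, 0 < c → ∀ᶠ m : ℕ in Filter.atTop, (1 : ℝ) / m < c := fun c hc =>
      (tendsto_one_div_atTop_nhds_zero_nat (𝕜 := ℝ)).eventually_lt_const hc
    obtain ⟨m, h⟩ := ((Filter.eventually_gt_atTop 0).and ((ev (r / 8) (by linarith)).and ((ev (1 / 8) (by norm_num)).and
      ((ev (δ2 / 4) (by linarith)).and ((ev (δ1 / 8) (by linarith)).and ((ev d0 hd0).and ((ev d1 hd1).and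
      ((ev d2 hd2).and (ev d3 hd3))))))))).exists
    exact ⟨m, h⟩
  obtain ⟨m1, m2, m3, m4, m5, m6, m7, m8⟩ := hm2
  have hmp : (0 : ℝ) < m := by exact_mod_cast hm1
  set h := 2 / (m : ℝ) with hh'
  have hh : 0 < h := by positivity
  have hm : h * m = 2 := by rw [hh']; field_simp
  have h1m : (1 : ℝ) / m = h / 2 := by rw [hh']; ring
  rw [h1m] at m1 m2 m3 m4 m5 m6 m7 m8
  obtain ⟨t, ht0, ht1, htne⟩ := rb_pert (fun v => u (rbZ h v)) (ε := min (e * h / 4) (η * h / 16)) (by positivity)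
  have ht2 := lt_of_lt_of_le ht1 (min_le_left _ _)
  have ht3 := lt_of_lt_of_le ht1 (min_le_right _ _)
  set F : ℤ × ℤ → ℝ := fun v => u (rbZ h v) + t * (v.1 + v.2) with hF
  obtain ⟨n, hn1, hn2⟩ := rb_core (u := u) (F := F) (h := h) (e := e) (R := R) (η := η) (r := r) (g1 := g1) (g2 := g2)
    (m := m) hm hh he S hR hpR hSd hr hrR (by linarith) (by linarith) hη (by rw [hηdef]; linarith) he1 he2
    (by
      intro p hp z hz1 hz2
      have hz : ‖z‖ < 1 := by
        have : z = (z - p) + p := by ring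
        rw [this]; refine (norm_add_le _ _).trans_lt ?_; linarith [hpR p hp]
      rw [← rbV_eq u hz.le]
      refine hg1 z (by linarith) ?_
      intro q hq
      by_cases hqp : q = p
      · rw [hqp]; exact hz1
      · have := hSd q hq p hp hqp
        have h3 := norm_sub_le_norm_sub_add_norm_sub q z p
        rw [norm_sub_rev q z] at h3; linarith)
    hg2 hur
    (by
      intro v hv k
      have a := rbZ_dist h hh.le v (rbNb v k) (rbNb_near v k).1 (rbNb_near v k).2
      have hw : ‖rbZ h (rbNb v k)‖ ≤ 5 := by
        have : rbZ h (rbNb v k) = (rbZ h (rbNb v k) - rbZ h v) + rbZ h v := by ring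
        rw [this]; refine (norm_add_le _ _).trans ?_; linarith
      have b := htay (rbZ h v) (rbZ h (rbNb v k)) (by linarith) hw (by linarith)
      have c : |F (rbNb v k) - F v - fderiv ℝ u (rbZ h v) (rbZ h (rbNb v k) - rbZ h v)| ≤
          |u (rbZ h (rbNb v k)) - u (rbZ h v) - fderiv ℝ u (rbZ h v) (rbZ h (rbNb v k) - rbZ h v)| + t * 2 := by
        have e1 : F (rbNb v k) - F v - fderiv ℝ u (rbZ h v) (rbZ h (rbNb v k) - rbZ h v) =
          (u (rbZ h (rbNb v k)) - u (rbZ h v) - fderiv ℝ u (rbZ h v) (rbZ h (rbNb v k) - rbZ h v)) +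
            t * ((rbDir k).1 + (rbDir k).2) := by
          simp only [hF, rbNb, Prod.fst_add, Prod.snd_add]; push_cast; ring
        rw [e1]
        refine (abs_add_le _ _).trans (add_le_add le_rfl ?_)
        rw [abs_mul, abs_of_pos ht0]
        have : ∀ k, |(rbDir k).1 + (rbDir k).2| ≤ 2 := by decide
        have h2 : |((rbDir k).1 : ℝ) + (rbDir k).2| ≤ 2 := by exact_mod_cast this k
        exact mul_le_mul_of_nonneg_left h2 ht0.le
      have : e / 4 * ‖rbZ h (rbNb v k) - rbZ h v‖ ≤ e / 4 * (2 * h) :=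
        mul_le_mul_of_nonneg_left a (by linarith)
      linarith)
    (by
      intro z w hz hw hzw
      have := hV z (by simpa using hz) w (by simpa using hw) (by rw [dist_eq_norm]; linarith)
      rw [dist_eq_norm] at this; exact this.le)
    (by
      intro v hv
      simp only [hF, add_sub_cancel_left]
      rw [abs_mul, abs_of_pos ht0]
      have a := (Complex.abs_re_le_norm (rbZ h v)).trans hv
      have b := (Complex.abs_im_le_norm (rbZ h v)).trans hv
      simp only [rbZ] at a b
      rw [abs_mul, abs_of_pos hh] at a b
      have c := abs_add_le (v.1 : ℝ) v.2
      have d : h * |(v.1 : ℝ) + v.2| ≤ 8 := by nlinarith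
      have e3 : t * |(v.1 : ℝ) + v.2| ≤ (η * h / 16) * |(v.1 : ℝ) + v.2| :=
        mul_le_mul_of_nonneg_right ht3.le (abs_nonneg _)
      nlinarith)
    htne
  refine ⟨n, hn1, ?_⟩
  rw [← hn2, rb_bdry hm hα hne]
  intro x hx y hy hxy
  rw [h1m] at hxy
  exact ⟨f0 x hx y hy (by linarith), f1 x hx y hy (by linarith), f2 x hx y hy (by linarith), f3 x hx y hy (by linarith)⟩

theorem rb_lift {w : ℝ → ℂ} (hw : Continuous w) (hne : ∀ t, w t ≠ 0) :
    ∃ β : ℝ → ℝ, Continuous β ∧ ∀ t, w t = ‖w t‖ * Complex.exp (β t * Complex.I) := by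
  have hn : ∀ t, ‖w t‖ ≠ 0 := fun t => norm_ne_zero_iff.2 (hne t)
  let c : C(ℝ, Circle) := ⟨fun t => ⟨w t / ‖w t‖, mem_sphere_zero_iff_norm.2 <| by
    rw [norm_div, Complex.norm_real, norm_norm, div_self (hn t)]⟩, by
    refine Continuous.subtype_mk ?_ _
    exact hw.div (Complex.continuous_ofReal.comp hw.norm) (fun t => by exact_mod_cast hn t)⟩
  obtain ⟨e0, he0⟩ : ∃ e0 : ℝ, Circle.exp e0 = c 0 := ⟨Complex.arg (c 0), Circle.exp_arg _⟩
  obtain ⟨F, ⟨_, hF⟩, _⟩ := Circle.isCoveringMap_exp.existsUnique_continuousMap_lifts c 0 e0 he0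
  refine ⟨F, F.continuous, fun t => ?_⟩
  have h1 : Circle.exp (F t) = c t := congrFun hF t
  have h2 := congrArg (Subtype.val) h1
  have h3 : Complex.exp (F t * Complex.I) = w t / ‖w t‖ := by
    rw [← Circle.coe_exp]; exact h2
  rw [h3, mul_div_cancel₀]
  exact_mod_cast hn t

theorem rb_period {w : ℝ → ℂ} (hne : ∀ t, w t ≠ 0) (hper : ∀ t, w (t + 2 * Real.pi) = w t)
    {β : ℝ → ℝ} (hβ : Continuous β) (h : ∀ t, w t = ‖w t‖ * Complex.exp (β t * Complex.I)) (s t : ℝ) :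
    β (s + 2 * Real.pi) - β s = β (t + 2 * Real.pi) - β t := by
  have key : (fun x => β (x + 2 * Real.pi)) = fun x => β x + (β (t + 2 * Real.pi) - β t) := by
    have e : ∀ x, Circle.exp (β (x + 2 * Real.pi)) = Circle.exp (β x) := by
      intro x
      apply Subtype.ext
      rw [Circle.coe_exp, Circle.coe_exp]
      have h1 := h x
      have h2 := h (x + 2 * Real.pi)
      rw [hper] at h2
      have hn : (‖w x‖ : ℂ) ≠ 0 := by exact_mod_cast norm_ne_zero_iff.2 (hne x)
      exact mul_left_cancel₀ hn (h2.symm.trans h1)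
    refine Circle.isCoveringMap_exp.eq_of_comp_eq (by fun_prop) (by fun_prop) ?_ t (by ring)
    funext x
    simp only [Function.comp]
    rw [Circle.exp_add, Circle.exp_sub, e, e]; simp
  have := congrFun key s
  linarith

theorem rb_seg {β : ℝ → ℝ} (hβ : Continuous β) {a b : ℝ} (hab : a < b)
    (hpos : ∀ t ∈ Set.Ioo a b, 0 < Real.sin (β t)) (ha : Real.sin (β a) = 0) (hb : Real.sin (β b) = 0)
    {x y : ℝ} (hx : x = 1 ∨ x = -1) (hy : y = 1 ∨ y = -1)
    (hxa : 0 < x * Real.cos (β a)) (hyb : 0 < y * Real.cos (β b)) :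
    β b - β a = Real.pi / 2 * (x - y) := by
  have hpi := Real.pi_pos
  set k : ℤ := ⌊β ((a + b) / 2) / (2 * Real.pi)⌋
  let δ : ℝ → ℝ := fun t => β t - k * (2 * Real.pi)
  have hδ : Continuous δ := by fun_prop
  have sδ : ∀ t, Real.sin (δ t) = Real.sin (β t) := fun t => Real.sin_sub_int_mul_two_pi _ _
  have cδ : ∀ t, Real.cos (δ t) = Real.cos (β t) := fun t => Real.cos_sub_int_mul_two_pi _ _
  have mI : (a + b) / 2 ∈ Set.Ioo a b := ⟨by linarith, by linarith⟩
  have m0 : 0 ≤ δ ((a + b) / 2) := by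
    have := Int.floor_le (β ((a + b) / 2) / (2 * Real.pi))
    rw [le_div_iff₀ (by positivity)] at this
    simp only [δ]; linarith
  have m1 : δ ((a + b) / 2) < 2 * Real.pi := by
    have := Int.lt_floor_add_one (β ((a + b) / 2) / (2 * Real.pi))
    rw [div_lt_iff₀ (by positivity)] at this
    simp only [δ]; linarith
  have m2 : δ ((a + b) / 2) ≤ Real.pi := by
    by_contra hc
    push Not at hc
    have := hpos _ mI
    rw [← sδ] at this
    have h3 : Real.sin (δ ((a + b) / 2) - 2 * Real.pi) < 0 :=
      Real.sin_neg_of_neg_of_neg_pi_lt (by linarith) (by linarith)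
    rw [Real.sin_sub_two_pi] at h3; linarith
  have himg : (δ '' Set.Ioo a b).OrdConnected := (isPreconnected_Ioo.image δ hδ.continuousOn).ordConnected
  have noz : ∀ v ∈ δ '' Set.Ioo a b, Real.sin v ≠ 0 := by
    rintro _ ⟨t, ht, rfl⟩
    rw [sδ]; exact (hpos t ht).ne'
  have hmaps : Set.MapsTo δ (Set.Ioo a b) (Set.Icc 0 Real.pi) := by
    intro t ht
    constructor
    · by_contra hc
      push Not at hc
      exact noz 0 (himg.out ⟨t, ht, rfl⟩ ⟨_, mI, rfl⟩ ⟨hc.le, m0⟩) Real.sin_zero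
    · by_contra hc
      push Not at hc
      exact noz Real.pi (himg.out ⟨_, mI, rfl⟩ ⟨t, ht, rfl⟩ ⟨m2, hc.le⟩) Real.sin_pi
  have hcl := hmaps.closure hδ
  rw [closure_Ioo hab.ne, isClosed_Icc.closure_eq] at hcl
  have ends : ∀ t ∈ Set.Icc a b, Real.sin (β t) = 0 → ∀ x : ℝ, (x = 1 ∨ x = -1) → 0 < x * Real.cos (β t) →
      δ t = Real.pi / 2 * (1 - x) := by
    intro t ht hs x hx hxt
    obtain ⟨d0, d1⟩ := hcl ht
    rw [← sδ] at hs
    rw [← cδ] at hxt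
    have : δ t = 0 ∨ δ t = Real.pi := by
      by_contra hc
      push Not at hc
      have := Real.sin_pos_of_pos_of_lt_pi (lt_of_le_of_ne d0 (Ne.symm hc.1)) (lt_of_le_of_ne d1 hc.2)
      linarith
    rcases this with h | h <;> rcases hx with rfl | rfl <;> rw [h] at hxt ⊢ <;> simp at hxt ⊢ <;> linarith
  have e1 := ends a ⟨le_rfl, hab.le⟩ ha x hx hxa
  have e2 := ends b ⟨hab.le, le_rfl⟩ hb y hy hyb
  simp only [δ] at e1 e2
  linarith

theorem rb_right {T : ℝ → ℝ} {a b : ℝ} (hab : a < b) (hd : DifferentiableAt ℝ T a) (h0 : T a = 0)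
    (h : ∀ t ∈ Set.Ioo a b, 0 < T t) : 0 ≤ deriv T a := by
  have h1 := (hasDerivAt_iff_tendsto_slope.1 hd.hasDerivAt).mono_left
    (nhdsWithin_mono a (s := Set.Ioi a) (fun x (hx : a < x) => hx.ne'))
  refine ge_of_tendsto h1 ?_
  filter_upwards [Ioo_mem_nhdsGT hab] with t ht
  rw [slope_def_field, h0, sub_zero]
  exact div_nonneg (h t ht).le (by linarith [ht.1])

theorem rb_left {T : ℝ → ℝ} {a b : ℝ} (hab : a < b) (hd : DifferentiableAt ℝ T b) (h0 : T b = 0)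
    (h : ∀ t ∈ Set.Ioo a b, 0 < T t) : deriv T b ≤ 0 := by
  have h1 := (hasDerivAt_iff_tendsto_slope.1 hd.hasDerivAt).mono_left
    (nhdsWithin_mono b (s := Set.Iio b) (fun x (hx : x < b) => hx.ne))
  refine le_of_tendsto h1 ?_
  filter_upwards [Ioo_mem_nhdsLT hab] with t ht
  rw [slope_def_field, h0, sub_zero]
  exact div_nonpos_of_nonneg_of_nonpos (h t ht).le (by linarith [ht.2])

/-- change of the lift between two consecutive nodes -/
theorem rb_arc {w : ℝ → ℂ} (hne : ∀ t, w t ≠ 0) {β : ℝ → ℝ} (hβ : Continuous β)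
    (h : ∀ t, w t = ‖w t‖ * Complex.exp (β t * Complex.I))
    {T : ℝ → ℝ} (hT : ∀ t, (w t).im = T t) (hd : Differentiable ℝ T) {a b : ℝ} (hab : a < b)
    (ha : T a = 0) (hb : T b = 0) (ha2 : deriv T a ≠ 0) (hb2 : deriv T b ≠ 0)
    (hno : ∀ t ∈ Set.Ioo a b, T t ≠ 0) {x y : ℝ} (hx : x = 1 ∨ x = -1) (hy : y = 1 ∨ y = -1)
    (hxa : (deriv T a < 0 → 0 < x * (w a).re) ∧ (0 < deriv T a → x * (w a).re < 0))
    (hyb : (deriv T b < 0 → 0 < y * (w b).re) ∧ (0 < deriv T b → y * (w b).re < 0)) :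
    β b - β a = -(Real.pi / 2 * (x + y)) := by
  have hn : ∀ t, 0 < ‖w t‖ := fun t => norm_pos_iff.2 (hne t)
  have him : ∀ t, T t = ‖w t‖ * Real.sin (β t) := by
    intro t; rw [← hT, h t]; simp [Complex.exp_ofReal_mul_I_im]
  have hre : ∀ t, (w t).re = ‖w t‖ * Real.cos (β t) := by
    intro t; conv_lhs => rw [h t]
    simp [Complex.exp_ofReal_mul_I_re]
  have sin0 : ∀ t, T t = 0 → Real.sin (β t) = 0 := by
    intro t ht
    rw [him] at ht
    exact (mul_eq_zero.1 ht).resolve_left (hn t).ne'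
  have cosp : ∀ t z, 0 < z * (w t).re → 0 < z * Real.cos (β t) := by
    intro t z hz
    rw [hre, mul_left_comm] at hz
    exact (pos_iff_pos_of_mul_pos hz).1 (hn t)
  have mI : (a + b) / 2 ∈ Set.Ioo a b := ⟨by linarith, by linarith⟩
  have himg : (T '' Set.Ioo a b).OrdConnected :=
    (isPreconnected_Ioo.image T hd.continuous.continuousOn).ordConnected
  have n0 : (0:ℝ) ∉ T '' Set.Ioo a b := by rintro ⟨t, ht, h0⟩; exact hno t ht h0
  rcases lt_or_gt_of_ne (hno _ mI) with hm | hm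
  · have neg : ∀ t ∈ Set.Ioo a b, T t < 0 := by
      intro t ht
      by_contra hc
      push Not at hc
      exact n0 (himg.out ⟨_, mI, rfl⟩ ⟨t, ht, rfl⟩ ⟨hm.le, hc⟩)
    have d1 := rb_right (T := fun t => -T t) hab (hd a).neg (by simp [ha]) (fun t ht => by linarith [neg t ht])
    have d2 := rb_left (T := fun t => -T t) hab (hd b).neg (by simp [hb]) (fun t ht => by linarith [neg t ht])
    rw [deriv.fun_neg] at d1 d2
    have d1' : deriv T a < 0 := lt_of_le_of_ne (by linarith) ha2
    have d2' : 0 < deriv T b := lt_of_le_of_ne (by linarith) hb2.symm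
    have := rb_seg (β := fun t => -β t) hβ.neg hab (x := x) (y := -y) (fun t ht => by
      rw [Real.sin_neg]
      have := neg t ht
      rw [him] at this
      have := neg_of_mul_neg_right this (hn t).le
      linarith) (by simp [sin0 a ha]) (by simp [sin0 b hb]) hx (by rcases hy with rfl | rfl <;> simp)
      (by rw [Real.cos_neg]; exact cosp _ _ (hxa.1 d1'))
      (by rw [Real.cos_neg]; exact cosp _ _ (by linarith [hyb.2 d2']))
    linarith
  · have pos : ∀ t ∈ Set.Ioo a b, 0 < T t := by
      intro t ht
      by_contra hc
      push Not at hc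
      exact n0 (himg.out ⟨t, ht, rfl⟩ ⟨_, mI, rfl⟩ ⟨hc, hm.le⟩)
    have d1 := rb_right hab (hd a) ha pos
    have d2 := rb_left hab (hd b) hb pos
    have d1' : 0 < deriv T a := lt_of_le_of_ne d1 ha2.symm
    have d2' : deriv T b < 0 := lt_of_le_of_ne d2 hb2
    have := rb_seg hβ hab (x := -x) (y := y) (fun t ht => by
      have := pos t ht
      rw [him] at this
      exact (pos_iff_pos_of_mul_pos this).1 (hn t)) (sin0 a ha) (sin0 b hb) (by rcases hx with rfl | rfl <;> simp) hy
      (cosp _ _ (by linarith [hxa.2 d1'])) (cosp _ _ (hyb.1 d2'))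
    linarith

theorem rb_nodes {n : ℕ} (a : Ribbon n) {w : ℝ → ℂ} (hne : ∀ t, w t ≠ 0)
    (hper : ∀ t, w (t + 2 * Real.pi) = w t)
    {β : ℝ → ℝ} (hβ : Continuous β) (h : ∀ t, w t = ‖w t‖ * Complex.exp (β t * Complex.I))
    (hT : ∀ t, (w t).im = deriv a.g t)
    (hnode : ∀ i, (deriv (deriv a.g) (a.θ i) < 0 → 0 < (a.ν i : ℝ) * (w (a.θ i)).re) ∧
      (0 < deriv (deriv a.g) (a.θ i) → (a.ν i : ℝ) * (w (a.θ i)).re < 0)) :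
    β (7 * Real.pi / 4) - β (-(Real.pi / 4)) = -(Real.pi * (a.sigma : ℝ)) := by
  have hpi := Real.pi_pos
  have hn := a.n_pos
  set T := deriv a.g with hTdef
  have hd : Differentiable ℝ T := by
    have h2 : ContDiff ℝ 2 a.g := a.smooth_g.of_le (WithTop.coe_le_coe.2 (le_top : (2 : ℕ∞) ≤ ⊤))
    have h1 : ContDiff ℝ 1 T := ((contDiff_succ_iff_deriv (n := 1)).1 h2).2.2
    exact h1.differentiable one_ne_zero
  have Tper : ∀ t, T (t + 2 * Real.pi) = T t := by
    intro t; rw [← hT, ← hT, hper]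
  have T2per : ∀ t, deriv T (t + 2 * Real.pi) = deriv T t := by
    intro t
    rw [← deriv_comp_add_const]
    congr 1; funext x; exact Tper x
  let z0 : Fin n := ⟨0, hn⟩
  let Θ : ℕ → ℝ := fun i => if hi : i < n then a.θ ⟨i, hi⟩ else a.θ z0 + 2 * Real.pi
  let N : ℕ → ℝ := fun i => if hi : i < n then (a.ν ⟨i, hi⟩ : ℝ) else (a.ν z0 : ℝ)
  have P0 : ∀ i, T (Θ i) = 0 := by
    intro i; simp only [Θ]; split_ifs
    · exact a.node_crit _
    · rw [Tper]; exact a.node_crit _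
  have P1 : ∀ i, deriv T (Θ i) ≠ 0 := by
    intro i; simp only [Θ]; split_ifs
    · exact a.node_nondeg _
    · rw [T2per]; exact a.node_nondeg _
  have P2 : ∀ i, N i = 1 ∨ N i = -1 := by
    intro i; simp only [N]; split_ifs
    · rcases a.nu_sign ⟨i, by assumption⟩ with h | h <;> simp [h]
    · rcases a.nu_sign z0 with h | h <;> simp [h]
  have P3 : ∀ i, (deriv T (Θ i) < 0 → 0 < N i * (w (Θ i)).re) ∧ (0 < deriv T (Θ i) → N i * (w (Θ i)).re < 0) := by
    intro i; simp only [Θ, N]; split_ifs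
    · exact hnode _
    · rw [T2per, hper]; exact hnode _
  have P4 : ∀ i, i < n → Θ i < Θ (i + 1) := by
    intro i hi
    simp only [Θ, hi, dif_pos]
    split_ifs
    · exact a.theta_mono (by simp [Fin.lt_def])
    · have := (a.theta_mem ⟨i, hi⟩).2
      have := (a.theta_mem z0).1
      linarith
  have P5 : ∀ i, i < n → ∀ t ∈ Set.Ioo (Θ i) (Θ (i + 1)), T t ≠ 0 := by
    intro i hi t ht h0
    simp only [Θ, hi, dif_pos] at ht
    have t0 := (a.theta_mem ⟨i, hi⟩).1
    by_cases ht2 : t < 2 * Real.pi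
    · obtain ⟨j, rfl⟩ := a.crit_only t ⟨by linarith [ht.1], ht2⟩ h0
      have h1 := a.theta_mono.lt_iff_lt.1 ht.1
      rw [Fin.lt_def] at h1
      simp only at h1
      by_cases hi1 : i + 1 < n
      · rw [dif_pos hi1] at ht
        have h2 := a.theta_mono.lt_iff_lt.1 ht.2
        rw [Fin.lt_def] at h2
        simp only at h2
        omega
      · have := j.2; omega
    · push Not at ht2
      by_cases hi1 : i + 1 < n
      · rw [dif_pos hi1] at ht
        linarith [ht.2, (a.theta_mem ⟨i + 1, hi1⟩).2]
      · rw [dif_neg hi1] at ht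
        have := Tper (t - 2 * Real.pi)
        rw [sub_add_cancel, h0] at this
        obtain ⟨j, hj⟩ := a.crit_only (t - 2 * Real.pi) ⟨by linarith, by linarith [ht.2, (a.theta_mem z0).2]⟩ this.symm
        have h1 : a.θ j < a.θ z0 := by linarith [ht.2]
        have h2 := a.theta_mono.lt_iff_lt.1 h1
        rw [Fin.lt_def] at h2
        simp [z0] at h2
  have step : ∀ i ∈ Finset.range n, β (Θ (i + 1)) - β (Θ i) = -(Real.pi / 2 * (N i + N (i + 1))) := by
    intro i hi
    rw [Finset.mem_range] at hi
    exact rb_arc hne hβ h hT hd (P4 i hi) (P0 i) (P0 _) (P1 i) (P1 _) (P5 i hi) (P2 i) (P2 _) (P3 i) (P3 _)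
  have tot := Finset.sum_congr rfl step
  rw [Finset.sum_range_sub (fun i => β (Θ i)), Finset.sum_neg_distrib, ← Finset.mul_sum,
    Finset.sum_add_distrib] at tot
  have s1 : ∑ i ∈ Finset.range n, N i = (a.sigma : ℝ) := by
    rw [Finset.sum_range, Ribbon.sigma]
    push_cast
    refine Finset.sum_congr rfl fun i _ => ?_
    simp [N, i.2]
  have s2 : ∑ i ∈ Finset.range n, N (i + 1) = (a.sigma : ℝ) := by
    have h1 := Finset.sum_range_succ N n
    rw [Finset.sum_range_succ'] at h1
    have : N n = N 0 := by simp [N, hn, z0]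
    linarith
  have e0 : Θ 0 = a.θ z0 := by simp [Θ, hn, z0]
  have en : Θ n = a.θ z0 + 2 * Real.pi := by simp [Θ]
  rw [s1, s2, e0, en, rb_period hne hper hβ h _ (-(Real.pi / 4))] at tot
  rw [show 7 * Real.pi / 4 = -(Real.pi / 4) + 2 * Real.pi by ring]
  linarith

def rbL : ℂ ≃ₗᵢ[ℝ] E2 := Complex.orthonormalBasisOneI.repr

theorem rbL_exp (t : ℝ) : rbL (Complex.exp (t * Complex.I)) = sphPt t := by
  ext i
  fin_cases i <;>
    simp [rbL, sphPt, Complex.orthonormalBasisOneI_repr_apply, Complex.exp_ofReal_mul_I_re, Complex.exp_ofReal_mul_I_im]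

theorem rb_fderiv {f : E2 → ℝ} (hf : Differentiable ℝ f) (z v : ℂ) :
    fderiv ℝ (fun z => f (rbL z)) z v = fderiv ℝ f (rbL z) (rbL v) := by
  have h1 : HasFDerivAt (fun z => f (rbL z)) ((fderiv ℝ f (rbL z)).comp (rbL.toContinuousLinearEquiv : ℂ →L[ℝ] E2)) z :=
    (hf (rbL z)).hasFDerivAt.comp z rbL.toContinuousLinearEquiv.hasFDerivAt
  rw [h1.fderiv]; rfl

theorem rb_ext {n : ℕ} (a : Ribbon n) {f : E2 → ℝ} (hf : IsExtension a f) (hfin : (critPts f).Finite) :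
    2 - a.sigma ≤ 2 * (critPts f).ncard ∧ ((critPts f).ncard = 0 → a.sigma = 2) := by
  obtain ⟨hsm, hval, hsph, hnode⟩ := hf
  have hpi := Real.pi_pos
  have hf1 : ContDiff ℝ 1 f := hsm.of_le (WithTop.coe_le_coe.2 (le_top : (1 : ℕ∞) ≤ ⊤))
  have hfd : Differentiable ℝ f := hf1.differentiable one_ne_zero
  set u : ℂ → ℝ := fun z => f (rbL z) with hudef
  have hu : ContDiff ℝ 1 u := hf1.comp rbL.contDiff
  have hud : Differentiable ℝ u := hu.differentiable one_ne_zero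
  have hG0 : ∀ z, rbG u z = 0 → fderiv ℝ f (rbL z) = 0 := by
    intro z hz
    ext v
    obtain ⟨v, rfl⟩ := rbL.surjective v
    rw [← rb_fderiv hfd, rbG_app, hz]; simp
  let S : Finset ℂ := (hfin.preimage (rbL.injective.injOn)).toFinset
  have hS : ∀ z, z ∈ S ↔ ‖z‖ < 1 ∧ fderiv ℝ f (rbL z) = 0 := by
    intro z
    simp [S, critPts, rbL.norm_map]
  have hcard : S.card = (critPts f).ncard := by
    rw [← Set.ncard_eq_toFinset_card _ (hfin.preimage (rbL.injective.injOn))]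
    exact Set.ncard_preimage_of_injective_subset_range rbL.injective (fun x _ => rbL.surjective x)
  have hS1 : ∀ p ∈ S, ‖p‖ < 1 := fun p hp => ((hS p).1 hp).1
  have hS2 : ∀ z, ‖z‖ ≤ 1 → rbG u z = 0 → z ∈ S := by
    intro z hz h0
    rw [hS]
    refine ⟨lt_of_le_of_ne hz fun h1 => ?_, hG0 z h0⟩
    exact hsph (rbL z) (by simp [rbL.norm_map, h1]) (hG0 z h0)
  let p : ℝ → ℂ := fun t => Complex.exp (t * Complex.I)
  have hpn : ∀ t, ‖p t‖ = 1 := Complex.norm_exp_ofReal_mul_I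
  have hpc : Continuous p := by fun_prop
  have hGp : ∀ t, rbG u (p t) ≠ 0 := fun t h0 => by
    have := hS1 _ (hS2 _ (hpn t).le h0)
    rw [hpn] at this; linarith
  let w : ℝ → ℂ := fun t => (starRingEnd ℂ) (p t) * rbG u (p t)
  have hpw : ∀ t, rbG u (p t) = p t * w t := by
    intro t
    simp only [w]
    rw [← mul_assoc, Complex.mul_conj, Complex.normSq_eq_norm_sq, hpn]; simp
  have hwne : ∀ t, w t ≠ 0 := fun t h0 => hGp t (by rw [hpw, h0, mul_zero])
  have hwc : Continuous w := (Complex.continuous_conj.comp hpc).mul ((rbG_cont hu).comp hpc)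
  have hpper : ∀ t, p (t + 2 * Real.pi) = p t := by
    intro t
    simp only [p]
    push_cast
    rw [add_mul, Complex.exp_add, Complex.exp_two_pi_mul_I, mul_one]
  have hper : ∀ t, w (t + 2 * Real.pi) = w t := by
    intro t; simp only [w, hpper]
  have hre : ∀ t, (w t).re = ⟪gradient f (sphPt t), sphPt t⟫ := by
    intro t
    rw [gradient, InnerProductSpace.toDual_symm_apply, ← rbL_exp, ← rb_fderiv hfd, rbG_app]
    simp [w, p, u]
  have him : ∀ t, (w t).im = deriv a.g t := by
    intro t
    have hp : HasDerivAt p (p t * Complex.I) t := by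
      have h1 : HasDerivAt (fun s : ℝ => (s : ℂ) * Complex.I) Complex.I t := by
        simpa using (Complex.ofRealCLM.hasDerivAt (x := t)).mul_const Complex.I
      exact h1.cexp
    have h2 : HasDerivAt (fun s => u (p s)) (fderiv ℝ u (p t) (p t * Complex.I)) t :=
      (hud (p t)).hasFDerivAt.comp_hasDerivAt t hp
    have h3 : (fun s => u (p s)) = a.g := by
      funext s
      rw [← hval, ← rbL_exp]
    rw [h3] at h2
    rw [h2.deriv, rbG_app]
    simp [w]; ring
  obtain ⟨β, hβ, hw⟩ := rb_lift hwc hwne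
  have hN := rb_nodes a hwne hper hβ hw him (fun i => by rw [hre]; exact hnode i)
  obtain ⟨m, hm, hsum⟩ := rb_key hu S hS1 hS2 (α := fun t => t + β t) (by fun_prop) (fun t => by
    change rbG u (p t) = ‖rbG u (p t)‖ * _
    rw [hpw, norm_mul, hpn, one_mul]
    conv_lhs => rw [hw t]
    push_cast
    rw [add_mul, Complex.exp_add]
    simp only [p]; ring)
  have hE : (2 - a.sigma : ℤ) = 2 * ∑ q ∈ S, m q := by
    have h1 : (2:ℝ) - a.sigma = 2 * ((∑ q ∈ S, m q : ℤ) : ℝ) := by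
      apply mul_left_cancel₀ hpi.ne'
      linarith
    exact_mod_cast h1
  have hle : ∑ q ∈ S, m q ≤ S.card := by
    have := Finset.sum_le_card_nsmul S m 1 hm
    simpa using this
  rw [← hcard]
  refine ⟨by linarith, fun h0 => ?_⟩
  rw [Finset.card_eq_zero.1 h0] at hE
  simp at hE; linarith

theorem rb_gamma {n : ℕ} (a : Ribbon n) (m : ℕ) (hm : (2 * m : ℤ) ≤ 2 - a.sigma ∨ (m ≤ 1 ∧ a.sigma ≠ 2)) :
    (m : ℕ∞) ≤ gammaR a := by
  refine le_sInf ?_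
  rintro _ ⟨f, hf, rfl⟩
  by_cases hfin : (critPts f).Finite
  · obtain ⟨h1, h2⟩ := rb_ext a hf hfin
    rw [← hfin.cast_ncard_eq]
    have : m ≤ (critPts f).ncard := by
      rcases hm with hm | ⟨hm, hs⟩
      · omega
      · have : (critPts f).ncard ≠ 0 := fun h => hs (h2 h)
        omega
    exact_mod_cast this
  · rw [Set.encard_eq_top_iff.2 hfin]; exact le_top

theorem rb_final (n : ℕ) (a b : Ribbon n) (hν : ∀ i, b.ν i = -(a.ν i))
    (h2 : a.sigma ≠ 2) (h2' : a.sigma ≠ -2) :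
    ((2 + a.sigma.natAbs / 2 : ℕ) : ℕ∞) ≤ gammaR a + gammaR b := by
  have hs : b.sigma = -a.sigma := by simp [Ribbon.sigma, hν]
  rcases le_total 0 a.sigma with h | h
  · have h1 := rb_gamma a 1 (Or.inr ⟨le_rfl, h2⟩)
    have h3 := rb_gamma b (1 + a.sigma.natAbs / 2) (Or.inl (by omega))
    calc ((2 + a.sigma.natAbs / 2 : ℕ) : ℕ∞) = ((1 : ℕ) : ℕ∞) + ((1 + a.sigma.natAbs / 2 : ℕ) : ℕ∞) := by
          rw [← Nat.cast_add]; congr 1; omega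
      _ ≤ _ := add_le_add h1 h3
  · have h1 := rb_gamma b 1 (Or.inr ⟨le_rfl, by omega⟩)
    have h3 := rb_gamma a (1 + a.sigma.natAbs / 2) (Or.inl (by omega))
    calc ((2 + a.sigma.natAbs / 2 : ℕ) : ℕ∞) = ((1 + a.sigma.natAbs / 2 : ℕ) : ℕ∞) + ((1 : ℕ) : ℕ∞) := by
          rw [← Nat.cast_add]; congr 1; omega
      _ ≤ _ := add_le_add h3 h1

/-- If `a` is a ribbon with `σ(a) ∉ {−2, 2}` and `b = ā` is obtained from `a` by reversing the
sign of every node, then `γ(a) + γ(ā) ≥ 2 + |σ(a)|/2`. -/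
theorem stmt_10 (n : ℕ) (a b : Ribbon n)
    (hg : b.g = a.g) (hθ : b.θ = a.θ) (hν : ∀ i, b.ν i = -(a.ν i))
    (h2 : a.sigma ≠ 2) (h2' : a.sigma ≠ -2) :
    ((2 + a.sigma.natAbs / 2 : ℕ) : ℕ∞) ≤ gammaR a + gammaR b := by
  exact rb_final n a b hν h2 h2'
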